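/- Let F ∈ ℂ[x,y,s,t] be an irreducible polynomial of total degree δ such that none of F_x, F_y, F_s, F_t is identically zero. Then either F has the special sum form, or there is a permutation σ among σ₁ = (x,y,s,t), σ₂ = (s,y,x,t), σ₃ = (t,y,s,x) such that, for the polynomial F_σ and its associated sets 𝒯_σ, 𝒮_σ and curves, both of the following hold (with an absolute constant in the O-notation): (a) there exists a one-dimensional algebraic variety 𝒯' ⊂ ℂ² of degree O(δ⁴) containing 𝒯_σ such that for every (s,t) ∈ ℂ²\𝒯' the curve γ_{s,t} does not contain a popular curve; (b) there exists a one-dimensional algebraic variety 𝒮' ⊂ ℂ² of degree O(δ⁴) containing 𝒮_σ such that for every (x,y) ∈ ℂ²\𝒮' the dual curve γ*_{x,y} does not contain a popular dual curve. -/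

import Mathlib

open MvPolynomial

noncomputable section

def ev4 (F : MvPolynomial (Fin 4) ℂ) (x y s t : ℂ) : ℂ := eval ![x, y, s, t] F

def ev2 (g : MvPolynomial (Fin 2) ℂ) (p : ℂ × ℂ) : ℂ := eval ![p.1, p.2] g

def curveOf (F : MvPolynomial (Fin 4) ℂ) (c d : ℂ) : Set (ℂ × ℂ) :=
  {p : ℂ × ℂ | ev4 F p.1 p.2 c d = 0}

def dualCurveOf (F : MvPolynomial (Fin 4) ℂ) (a b : ℂ) : Set (ℂ × ℂ) :=
  {q : ℂ × ℂ | ev4 F a b q.1 q.2 = 0}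

def TT (F : MvPolynomial (Fin 4) ℂ) : Set (ℂ × ℂ) :=
  {q : ℂ × ℂ | ∀ x y : ℂ, ev4 F x y q.1 q.2 = 0}

def SS (F : MvPolynomial (Fin 4) ℂ) : Set (ℂ × ℂ) :=
  {p : ℂ × ℂ | ∀ s t : ℂ, ev4 F p.1 p.2 s t = 0}

def IsIrredCurve (γ : Set (ℂ × ℂ)) : Prop :=
  ∃ g : MvPolynomial (Fin 2) ℂ, Irreducible g ∧ γ = {p : ℂ × ℂ | ev2 g p = 0}

def IsPopular (F : MvPolynomial (Fin 4) ℂ) (δ : ℕ) (γ : Set (ℂ × ℂ)) : Prop :=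
  IsIrredCurve γ ∧ ∃ P : Finset (ℂ × ℂ), δ ^ 2 + 1 ≤ P.card ∧
    ∀ q ∈ P, q ∉ TT F ∧ γ ⊆ curveOf F q.1 q.2

def IsPopularDual (F : MvPolynomial (Fin 4) ℂ) (δ : ℕ) (γ : Set (ℂ × ℂ)) : Prop :=
  IsIrredCurve γ ∧ ∃ P : Finset (ℂ × ℂ), δ ^ 2 + 1 ≤ P.card ∧
    ∀ p ∈ P, p ∉ SS F ∧ γ ⊆ dualCurveOf F p.1 p.2

def zeroSetOf {n : ℕ} (I : Set (MvPolynomial (Fin n) ℂ)) : Set (Fin n → ℂ) :=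
  {p | ∀ f ∈ I, eval p f = 0}

def IsAlgSet {n : ℕ} (S : Set (Fin n → ℂ)) : Prop :=
  ∃ I : Set (MvPolynomial (Fin n) ℂ), S = zeroSetOf I

def IsIrredAlgSet {n : ℕ} (S : Set (Fin n → ℂ)) : Prop :=
  IsAlgSet S ∧ S.Nonempty ∧
    ∀ S₁ S₂ : Set (Fin n → ℂ), IsAlgSet S₁ → IsAlgSet S₂ → S = S₁ ∪ S₂ → S = S₁ ∨ S = S₂

def algDimLE {n : ℕ} (S : Set (Fin n → ℂ)) (d : ℕ) : Prop :=
  ∀ Z : Fin (d + 2) → Set (Fin n → ℂ),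
    (∀ i, IsIrredAlgSet (Z i) ∧ Z i ⊆ S) → ¬ StrictMono Z

def SpecialSumForm (F : MvPolynomial (Fin 4) ℂ) : Prop :=
  ∃ Z₀ : Set (Fin 4 → ℂ), IsAlgSet Z₀ ∧ Z₀ ⊆ {v | eval v F = 0} ∧ algDimLE Z₀ 2 ∧
    ∀ v : Fin 4 → ℂ, eval v F = 0 → v ∉ Z₀ →
      ∃ (D : Fin 4 → Set ℂ) (φ ψ : Fin 4 → ℂ → ℂ),
        (∀ i, IsOpen (D i) ∧ v i ∈ D i ∧ Set.InjOn (φ i) (D i) ∧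
          ∀ z ∈ D i, AnalyticAt ℂ (φ i) z ∧ AnalyticAt ℂ (ψ i) (φ i z) ∧ ψ i (φ i z) = z) ∧
        ∀ x y s t : ℂ, x ∈ D 0 → y ∈ D 1 → s ∈ D 2 → t ∈ D 3 →
          (eval ![x, y, s, t] F = 0 ↔ φ 0 x + φ 1 y + φ 2 s + φ 3 t = 0)

/-- Properties (a) and (b) of Proposition 2.7 for a given polynomial `G` (the renamed `F_σ`):
(a) a one-dimensional variety `𝒯'` (a curve of degree ≤ c·δ⁴ together with at most c·δ⁴
isolated points) contains `𝒯` and for `(s,t)` outside it the curve `γ_{s,t}` contains no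
popular curve; (b) the dual statement. -/
def GoodSplit (c : ℝ) (δ : ℕ) (G : MvPolynomial (Fin 4) ℂ) : Prop :=
  (∃ (g : MvPolynomial (Fin 2) ℂ) (P : Finset (ℂ × ℂ)), g ≠ 0 ∧
    (g.totalDegree : ℝ) ≤ c * (δ : ℝ) ^ 4 ∧ (P.card : ℝ) ≤ c * (δ : ℝ) ^ 4 ∧
    TT G ⊆ {p : ℂ × ℂ | ev2 g p = 0} ∪ ↑P ∧
    ∀ q : ℂ × ℂ, q ∉ ({p : ℂ × ℂ | ev2 g p = 0} ∪ ↑P : Set (ℂ × ℂ)) →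
      ¬ ∃ γ : Set (ℂ × ℂ), IsPopular G δ γ ∧ γ ⊆ curveOf G q.1 q.2) ∧
  (∃ (g : MvPolynomial (Fin 2) ℂ) (P : Finset (ℂ × ℂ)), g ≠ 0 ∧
    (g.totalDegree : ℝ) ≤ c * (δ : ℝ) ^ 4 ∧ (P.card : ℝ) ≤ c * (δ : ℝ) ^ 4 ∧
    SS G ⊆ {p : ℂ × ℂ | ev2 g p = 0} ∪ ↑P ∧
    ∀ p : ℂ × ℂ, p ∉ ({p' : ℂ × ℂ | ev2 g p' = 0} ∪ ↑P : Set (ℂ × ℂ)) →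
      ¬ ∃ γ : Set (ℂ × ℂ), IsPopularDual G δ γ ∧ γ ⊆ dualCurveOf G p.1 p.2)

open scoped Topology

theorem finrank_restrictTotalDegree_fin_two (d : ℕ) :
    2 * Module.finrank ℂ (restrictTotalDegree (Fin 2) ℂ d) = (d + 1) * (d + 2) := by
  have b := basisRestrictSupport ℂ {n : Fin 2 →₀ ℕ | (n.sum fun _ e => e) ≤ d}
  have h1 : Module.finrank ℂ (restrictTotalDegree (Fin 2) ℂ d) =
      Nat.card {n : Fin 2 →₀ ℕ | (n.sum fun _ e => e) ≤ d} :=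
    Module.finrank_eq_nat_card_basis b
  have hs : ∀ n : Fin 2 →₀ ℕ, (n.sum fun _ e => e) = n 0 + n 1 := by
    intro n
    rw [Finsupp.sum_fintype _ _ (fun _ => rfl), Fin.sum_univ_two]
  let e : {n : Fin 2 →₀ ℕ | (n.sum fun _ e => e) ≤ d} ≃ Σ i : Fin (d + 1), Fin (i + 1) :=
    { toFun := fun n => ⟨⟨n.1 0 + n.1 1, by
        have := n.2; simp only [Set.mem_ofPred_eq, hs] at this; omega⟩, ⟨n.1 0, by simp⟩⟩
      invFun := fun x => ⟨Finsupp.equivFunOnFinite.symm ![x.2.1, x.1.1 - x.2.1], by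
        have h1 := x.1.2
        have h2 := x.2.2
        simp only [Set.mem_ofPred_eq, hs]
        simp
        omega⟩
      left_inv := by
        rintro ⟨n, hn⟩
        ext i
        fin_cases i <;> simp
      right_inv := by
        rintro ⟨⟨i, hi⟩, ⟨j, hj⟩⟩
        simp only at hj
        have : j + (i - j) = i := by omega
        ext
        · simp; omega
        · simp only
          rw [Fin.heq_ext_iff]
          · simp
          · simp; omega }
  rw [h1, Nat.card_congr e, Nat.card_eq_fintype_card, Fintype.card_sigma]
  simp only [Fintype.card_fin]
  rw [Fin.sum_univ_eq_sum_range (fun i => i + 1)]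
  clear e h1 b
  induction d with
  | zero => simp
  | succ k ih => rw [Finset.sum_range_succ, mul_add, ih]; ring

theorem exists_eval_eq_single {ι : Type*} (P : Finset (ι → ℂ)) (p : ι → ℂ) :
    ∃ f : MvPolynomial ι ℂ, f.totalDegree ≤ P.card ∧ eval p f ≠ 0 ∧
      ∀ q ∈ P, q ≠ p → eval q f = 0 := by
  classical
  induction P using Finset.induction_on with
  | empty => exact ⟨1, by simp⟩
  | insert q P hq ih =>
    obtain ⟨f, hf, hp, hz⟩ := ih
    by_cases hqp : q = p
    · refine ⟨f, hf.trans (Finset.card_le_card (Finset.subset_insert _ _)), hp, ?_⟩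
      intro r hr hrp
      rcases Finset.mem_insert.1 hr with rfl | hr
      · exact absurd hqp hrp
      · exact hz r hr hrp
    · obtain ⟨i, hi⟩ := Function.ne_iff.1 hqp
      refine ⟨f * (X i - C (q i)), ?_, ?_, ?_⟩
      · rw [Finset.card_insert_of_notMem hq]
        refine (totalDegree_mul _ _).trans (add_le_add hf ?_)
        refine (totalDegree_sub_C_le _ _).trans ?_
        simp
      · simp only [map_mul, map_sub, eval_X, eval_C]
        exact mul_ne_zero hp (sub_ne_zero.2 (Ne.symm hi))
      · intro r hr hrp
        rcases Finset.mem_insert.1 hr with rfl | hr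
        · simp
        · simp [hz r hr hrp]

/-- Bézout's inequality in the affine plane. -/
theorem card_le_totalDegree_mul_of_isRelPrime {f g : MvPolynomial (Fin 2) ℂ}
    (hg : g ≠ 0) (h : IsRelPrime f g) (P : Finset (Fin 2 → ℂ))
    (hP : ∀ p ∈ P, eval p f = 0 ∧ eval p g = 0) :
    P.card ≤ f.totalDegree * g.totalDegree := by
  classical
  set m := f.totalDegree with hm
  set n := g.totalDegree with hn
  set N := P.card with hN
  let V : ℕ → Submodule ℂ (MvPolynomial (Fin 2) ℂ) := restrictTotalDegree (Fin 2) ℂ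
  have hV : ∀ d p, p ∈ V d ↔ p.totalDegree ≤ d := fun d p => mem_restrictTotalDegree _ _ _
  let Φ : V (N + n) × V (N + m) →ₗ[ℂ] V (N + m + n) :=
    LinearMap.codRestrict _
      (((LinearMap.mulLeft ℂ f).comp (V (N + n)).subtype).coprod
        ((LinearMap.mulLeft ℂ g).comp (V (N + m)).subtype)) (by
      rintro ⟨⟨a, ha⟩, ⟨b, hb⟩⟩
      rw [hV] at ha hb ⊢
      simp only [LinearMap.coprod_apply, LinearMap.comp_apply, Submodule.subtype_apply,
        LinearMap.mulLeft_apply]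
      refine (totalDegree_add _ _).trans (max_le ?_ ?_)
      · refine (totalDegree_mul _ _).trans ?_; omega
      · refine (totalDegree_mul _ _).trans ?_; omega)
  let K : V N →ₗ[ℂ] V (N + n) × V (N + m) :=
    (LinearMap.codRestrict _ ((LinearMap.mulLeft ℂ g).comp (V N).subtype) (by
      rintro ⟨c, hc⟩
      rw [hV] at hc ⊢
      refine (totalDegree_mul _ _).trans ?_
      simp only [Submodule.subtype_apply]; omega)).prod
    (LinearMap.codRestrict _ ((LinearMap.mulLeft ℂ (-f)).comp (V N).subtype) (by
      rintro ⟨c, hc⟩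
      rw [hV] at hc ⊢
      refine (totalDegree_mul _ _).trans ?_
      simp only [Submodule.subtype_apply, totalDegree_neg]; omega))
  let E : V (N + m + n) →ₗ[ℂ] (P → ℂ) :=
    (LinearMap.pi fun p : P => (aeval p.1).toLinearMap).comp (V (N + m + n)).subtype
  have hE : ∀ a p, E a p = eval p.1 a.1 := fun a p => by
    simp [E, aeval_eq_eval]
  have hker : LinearMap.ker Φ ≤ LinearMap.range K := by
    rintro ⟨⟨a, ha⟩, ⟨b, hb⟩⟩ hab
    have hab' : f * a + g * b = 0 := by
      have := congrArg Subtype.val (LinearMap.mem_ker.1 hab)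
      simpa [Φ] using this
    have hga : g ∣ a := by
      refine h.symm.dvd_of_dvd_mul_left ⟨-b, by linear_combination hab'⟩
    obtain ⟨c, rfl⟩ := hga
    have hb' : b = -f * c := by
      refine mul_left_cancel₀ hg ?_
      linear_combination hab'
    have hcN : c ∈ V N := by
      rw [hV] at ha ⊢
      rcases eq_or_ne c 0 with rfl | hc
      · simp
      · rw [totalDegree_mul_of_isDomain hg hc] at ha; omega
    refine ⟨⟨c, hcN⟩, ?_⟩
    subst hb'
    exact Prod.ext (Subtype.ext rfl) (Subtype.ext rfl)
  have hle : LinearMap.range Φ ≤ LinearMap.ker E := by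
    rintro _ ⟨⟨⟨a, ha⟩, ⟨b, hb⟩⟩, rfl⟩
    rw [LinearMap.mem_ker]
    ext p
    rw [hE]
    simp [Φ, (hP p.1 p.2).1, (hP p.1 p.2).2]
  have hsurj : LinearMap.range E = ⊤ := by
    rw [eq_top_iff, ← (Pi.basisFun ℂ P).span_eq, Submodule.span_le]
    rintro _ ⟨p, rfl⟩
    obtain ⟨u, hu, hup, huz⟩ := exists_eval_eq_single P p.1
    refine ⟨⟨C (eval p.1 u)⁻¹ * u, ?_⟩, ?_⟩
    · rw [hV]
      refine (totalDegree_mul _ _).trans ?_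
      simp only [totalDegree_C]; omega
    · ext q
      rw [hE]
      simp only [map_mul, eval_C, Pi.basisFun_apply, Pi.single_apply]
      split_ifs with hqp
      · subst hqp; exact inv_mul_cancel₀ hup
      · rw [huz q.1 q.2 (fun h => hqp (Subtype.ext h)), mul_zero]
  have e1 := LinearMap.finrank_range_add_finrank_ker Φ
  have e2 := LinearMap.finrank_range_add_finrank_ker E
  have e3 := Submodule.finrank_mono hker
  have e4 := LinearMap.finrank_range_le K
  have e5 := Submodule.finrank_mono hle
  rw [hsurj, finrank_top] at e2
  rw [Module.finrank_prod] at e1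
  have eP : Module.finrank ℂ (P → ℂ) = N := by simp [hN]
  have d1 := finrank_restrictTotalDegree_fin_two (N + n)
  have d2 := finrank_restrictTotalDegree_fin_two (N + m)
  have d3 := finrank_restrictTotalDegree_fin_two (N + m + n)
  have d4 := finrank_restrictTotalDegree_fin_two N
  simp only [V] at *
  nlinarith

theorem totalDegree_det_le {σ n : Type*} [Fintype n] [DecidableEq n]
    (M : Matrix n n (MvPolynomial σ ℂ)) {e : ℕ} (hM : ∀ i j, (M i j).totalDegree ≤ e) :
    M.det.totalDegree ≤ Fintype.card n * e := by
  rw [Matrix.det_apply]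
  refine totalDegree_finsetSum_le fun τ _ => ?_
  rw [Units.smul_def]
  refine (totalDegree_smul_le _ _).trans ((totalDegree_finsetProd _ _).trans ?_)
  calc _ ≤ ∑ _i : n, e := Finset.sum_le_sum fun i _ => hM _ _
    _ = _ := by simp

theorem resultant_ne_zero_of_irreducible {A : Type*} [CommRing A] [IsDomain A]
    [UniqueFactorizationMonoid A] {f g : Polynomial A} (hf : Irreducible f)
    (hdeg : f.natDegree ≠ 0) (hfg : ¬ f ∣ g) : f.resultant g ≠ 0 := by
  classical
  let : NormalizedGCDMonoid A := Classical.arbitrary _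
  let K := FractionRing A
  intro h
  have hinj : Function.Injective (algebraMap A K) := IsFractionRing.injective A K
  have h1 : (f.map (algebraMap A K)).resultant (g.map (algebraMap A K)) = 0 := by
    rw [Polynomial.natDegree_map_eq_of_injective hinj, Polynomial.natDegree_map_eq_of_injective hinj,
      Polynomial.resultant_map_map, h, map_zero]
  have hirr : Irreducible (f.map (algebraMap A K)) :=
    ((hf.isPrimitive hdeg).irreducible_iff_irreducible_map_fraction_map).1 hf
  have h2 := (Polynomial.resultant_eq_zero_iff.1 h1).2
  rw [hirr.coprime_iff_not_dvd, not_not] at h2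
  obtain ⟨k, hk⟩ := h2
  obtain ⟨b, hbM, hb⟩ := IsLocalization.integerNormalization_spec (nonZeroDivisors A) k
  have hb0 : b ≠ 0 := nonZeroDivisors.ne_zero hbM
  have h3 : f ∣ Polynomial.C b * g := by
    refine ⟨IsLocalization.integerNormalization (nonZeroDivisors A) k, ?_⟩
    apply Polynomial.map_injective _ hinj
    rw [Polynomial.map_mul, Polynomial.map_mul, hk, hb, Polynomial.map_C]
    rw [← algebraMap_smul K b k, Polynomial.smul_eq_C_mul]
    ring
  rcases hf.prime.dvd_or_dvd h3 with h4 | h4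
  · exact hdeg (Nat.le_zero.1 ((Polynomial.natDegree_le_of_dvd h4 (by simpa using hb0)).trans
      (by simp)))
  · exact hfg h4

theorem degreeOf_ne_zero_of_pderiv_ne_zero {σ : Type*} {i : σ} {F : MvPolynomial σ ℂ}
    (h : pderiv i F ≠ 0) : degreeOf i F ≠ 0 := by
  contrapose! h
  exact pderiv_eq_zero_of_notMem_vars (by simp [mem_vars_iff_degreeOf_ne_zero, h])

theorem totalDegree_coeff_finSuccEquiv_le {n : ℕ} (f : MvPolynomial (Fin (n + 1)) ℂ) (i : ℕ) :
    ((finSuccEquiv ℂ n f).coeff i).totalDegree ≤ f.totalDegree := by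
  by_cases h : (finSuccEquiv ℂ n f).coeff i = 0
  · simp [h]
  · exact le_trans (Nat.le_add_right _ _) (totalDegree_coeff_finSuccEquiv_add_le f i h)

theorem eval_cons_eq {n : ℕ} (F : MvPolynomial (Fin (n + 1)) ℂ) (s : ℂ) (v : Fin n → ℂ) :
    eval (Fin.cons s v : Fin (n + 1) → ℂ) F =
      ((finSuccEquiv ℂ n F).map (eval v)).eval s := eval_eq_eval_mv_eval' v s F

theorem exists_eliminant {n : ℕ} {F H : MvPolynomial (Fin (n + 1)) ℂ} (hF : Irreducible F)
    (h0 : pderiv 0 F ≠ 0) (hFH : ¬ F ∣ H) {e : ℕ} (hFe : F.totalDegree ≤ e)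
    (hHe : H.totalDegree ≤ e) :
    ∃ R : MvPolynomial (Fin n) ℂ, R ≠ 0 ∧ R.totalDegree ≤ 2 * e * e ∧
      ∀ (s : ℂ) (v : Fin n → ℂ), eval (Fin.cons s v : Fin (n + 1) → ℂ) F = 0 →
        eval (Fin.cons s v : Fin (n + 1) → ℂ) H = 0 → eval v R = 0 := by
  set f := finSuccEquiv ℂ n F with hf
  set g := finSuccEquiv ℂ n H with hg
  have hdeg : f.natDegree ≠ 0 := by
    rw [hf, natDegree_finSuccEquiv]
    exact degreeOf_ne_zero_of_pderiv_ne_zero h0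
  have hirr : Irreducible f := (MulEquiv.irreducible_iff (finSuccEquiv ℂ n)).2 hF
  have hfg : ¬ f ∣ g := fun h => hFH ((map_dvd_iff (finSuccEquiv ℂ n)).1 h)
  refine ⟨f.resultant g, resultant_ne_zero_of_irreducible hirr hdeg hfg, ?_, ?_⟩
  · unfold Polynomial.resultant
    refine (totalDegree_det_le (e := e) _ ?_).trans ?_
    · intro i j
      rw [Polynomial.sylvester, Matrix.of_apply]
      refine Fin.addCases (fun k => ?_) (fun k => ?_) j
      · rw [Fin.addCases_left]
        split_ifs
        · exact (totalDegree_coeff_finSuccEquiv_le _ _).trans hHe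
        · simp
      · rw [Fin.addCases_right]
        split_ifs
        · exact (totalDegree_coeff_finSuccEquiv_le _ _).trans hFe
        · simp
    · rw [Fintype.card_fin, two_mul]
      refine Nat.mul_le_mul_right _ (add_le_add ?_ ?_)
      · rw [hf, natDegree_finSuccEquiv]; exact (degreeOf_le_totalDegree _ _).trans hFe
      · rw [hg, natDegree_finSuccEquiv]; exact (degreeOf_le_totalDegree _ _).trans hHe
  · intro s v hFs hHs
    rw [eval_cons_eq] at hFs hHs
    obtain ⟨p, q, -, -, hpq⟩ := Polynomial.exists_mul_add_mul_eq_C_resultant f g le_rfl le_rfl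
      (Or.inl hdeg)
    have := congrArg (fun u => (Polynomial.map (eval v) u).eval s) hpq
    simp only [Polynomial.map_add, Polynomial.map_mul, Polynomial.eval_add, Polynomial.eval_mul,
      Polynomial.map_C, Polynomial.eval_C] at this
    rw [← this, hFs, hHs]; ring

theorem exists_coeff_vanishing {n : ℕ} {R : MvPolynomial (Fin (n + 1)) ℂ} (hR : R ≠ 0) :
    ∃ r : MvPolynomial (Fin n) ℂ, r ≠ 0 ∧ r.totalDegree ≤ R.totalDegree ∧
      ∀ v : Fin n → ℂ, {t : ℂ | eval (Fin.cons t v : Fin (n + 1) → ℂ) R = 0}.Infinite →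
        eval v r = 0 := by
  have h0 : finSuccEquiv ℂ n R ≠ 0 := by simpa using hR
  refine ⟨(finSuccEquiv ℂ n R).leadingCoeff, by simpa using h0,
    totalDegree_coeff_finSuccEquiv_le _ _, fun v hv => ?_⟩
  have : (finSuccEquiv ℂ n R).map (eval v) = 0 := by
    refine Polynomial.eq_zero_of_infinite_isRoot _ (hv.mono fun t ht => ?_)
    have ht' : eval (Fin.cons t v : Fin (n + 1) → ℂ) R = 0 := ht
    rw [eval_cons_eq] at ht'
    exact ht'
  have := congrArg (fun u => Polynomial.coeff u (finSuccEquiv ℂ n R).natDegree) this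
  simpa [Polynomial.coeff_map] using this

theorem exists_double_eliminant {F H : MvPolynomial (Fin 4) ℂ} (hF : Irreducible F)
    (h0 : pderiv 0 F ≠ 0) (hFH : ¬ F ∣ H) {e : ℕ} (hFe : F.totalDegree ≤ e)
    (hHe : H.totalDegree ≤ e) :
    ∃ r : MvPolynomial (Fin 2) ℂ, r ≠ 0 ∧ r.totalDegree ≤ 2 * e * e ∧
      ∀ a b : ℂ, {t : ℂ | ∃ s : ℂ, eval ![s, t, a, b] F = 0 ∧ eval ![s, t, a, b] H = 0}.Infinite →
        eval ![a, b] r = 0 := by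
  obtain ⟨R, hR0, hRe, hR⟩ := exists_eliminant hF h0 hFH hFe hHe
  obtain ⟨r, hr0, hre, hr⟩ := exists_coeff_vanishing hR0
  refine ⟨r, hr0, hre.trans hRe, fun a b hab => hr _ (hab.mono ?_)⟩
  rintro t ⟨s, h1, h2⟩
  exact hR s ![t, a, b] h1 h2

theorem dvd_pow_of_eval_eq_zero {σ : Type*} [Finite σ] {g u : MvPolynomial σ ℂ}
    (h : ∀ p, eval p g = 0 → eval p u = 0) : ∃ k, g ∣ u ^ k := by
  have : u ∈ (Ideal.span {g}).radical := by
    rw [← vanishingIdeal_zeroLocus_eq_radical (K := ℂ), mem_vanishingIdeal_iff]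
    intro p hp
    have := h p
    rw [aeval_eq_eval]
    apply h
    have := hp g (Ideal.mem_span_singleton_self g)
    rwa [aeval_eq_eval] at this
  obtain ⟨k, hk⟩ := this
  exact ⟨k, Ideal.mem_span_singleton.1 hk⟩

theorem Irreducible.dvd_of_eval_eq_zero {σ : Type*} [Finite σ] {g u : MvPolynomial σ ℂ}
    (hg : Irreducible g) (h : ∀ p, eval p g = 0 → eval p u = 0) : g ∣ u := by
  obtain ⟨k, hk⟩ := dvd_pow_of_eval_eq_zero h
  exact hg.prime.dvd_of_dvd_pow hk

theorem totalDegree_aeval_le {σ τ : Type*} {v : σ → MvPolynomial τ ℂ}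
    (hv : ∀ i, (v i).totalDegree ≤ 1) (F : MvPolynomial σ ℂ) :
    (aeval v F).totalDegree ≤ F.totalDegree := by
  rw [aeval_def, eval₂_eq]
  refine totalDegree_finsetSum_le fun m hm => ?_
  refine (totalDegree_mul _ _).trans ?_
  rw [algebraMap_eq, totalDegree_C, zero_add]
  refine (totalDegree_finsetProd _ _).trans ((Finset.sum_le_sum fun i _ => ?_).trans
    (le_totalDegree hm))
  exact (totalDegree_pow _ _).trans ((Nat.mul_le_mul_left _ (hv i)).trans (by simp))

/-- The polynomial `F(a, b, s, t)` in the variables `s, t`. -/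
def dualSection (F : MvPolynomial (Fin 4) ℂ) (p : Fin 2 → ℂ) : MvPolynomial (Fin 2) ℂ :=
  aeval ![C (p 0), C (p 1), X 0, X 1] F

/-- The polynomial `F(x, y, c, d)` in the variables `x, y`. -/
def primalSection (F : MvPolynomial (Fin 4) ℂ) (q : Fin 2 → ℂ) : MvPolynomial (Fin 2) ℂ :=
  aeval ![X 0, X 1, C (q 0), C (q 1)] F

theorem eval_dualSection (F : MvPolynomial (Fin 4) ℂ) (p q : Fin 2 → ℂ) :
    eval q (dualSection F p) = eval ![p 0, p 1, q 0, q 1] F := by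
  rw [dualSection, ← aeval_eq_eval, ← aeval_eq_eval, comp_aeval_apply]
  congr 2
  ext i
  fin_cases i <;> simp

theorem eval_primalSection (F : MvPolynomial (Fin 4) ℂ) (p q : Fin 2 → ℂ) :
    eval p (primalSection F q) = eval ![p 0, p 1, q 0, q 1] F := by
  rw [primalSection, ← aeval_eq_eval, ← aeval_eq_eval, comp_aeval_apply]
  congr 2
  ext i
  fin_cases i <;> simp

theorem totalDegree_dualSection_le (F : MvPolynomial (Fin 4) ℂ) (p : Fin 2 → ℂ) :
    (dualSection F p).totalDegree ≤ F.totalDegree := by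
  refine totalDegree_aeval_le (fun i => ?_) F
  fin_cases i <;> simp

theorem pderiv_aeval_of_pderiv_eq_single {σ τ : Type*} [DecidableEq σ]
    {v : σ → MvPolynomial τ ℂ} {j : τ} {k : σ}
    (hv : ∀ i, pderiv j (v i) = Pi.single (M := fun _ => MvPolynomial τ ℂ) k 1 i)
    (F : MvPolynomial σ ℂ) : pderiv j (aeval v F) = aeval v (pderiv k F) := by
  induction F using MvPolynomial.induction_on with
  | C a => simp
  | add f g hf hg => simp only [map_add, hf, hg]
  | mul_X f i hf =>
    simp only [map_mul, pderiv_mul, map_add, aeval_X, hf, hv, pderiv_X, Pi.single_apply]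
    split_ifs <;> simp

theorem pderiv_dualSection_zero (F : MvPolynomial (Fin 4) ℂ) (p : Fin 2 → ℂ) :
    pderiv 0 (dualSection F p) = dualSection (pderiv 2 F) p :=
  pderiv_aeval_of_pderiv_eq_single (fun i => by fin_cases i <;> simp [pderiv_X]) F

theorem pderiv_dualSection_one (F : MvPolynomial (Fin 4) ℂ) (p : Fin 2 → ℂ) :
    pderiv 1 (dualSection F p) = dualSection (pderiv 3 F) p :=
  pderiv_aeval_of_pderiv_eq_single (fun i => by fin_cases i <;> simp [pderiv_X]) F

theorem pderiv_primalSection_zero (F : MvPolynomial (Fin 4) ℂ) (p : Fin 2 → ℂ) :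
    pderiv 0 (primalSection F p) = primalSection (pderiv 0 F) p :=
  pderiv_aeval_of_pderiv_eq_single (fun i => by fin_cases i <;> simp [pderiv_X]) F

theorem pderiv_primalSection_one (F : MvPolynomial (Fin 4) ℂ) (p : Fin 2 → ℂ) :
    pderiv 1 (primalSection F p) = primalSection (pderiv 1 F) p :=
  pderiv_aeval_of_pderiv_eq_single (fun i => by fin_cases i <;> simp [pderiv_X]) F

theorem exists_dualSection_ne_zero {F : MvPolynomial (Fin 4) ℂ} (hF : Irreducible F)
    (h2 : pderiv 2 F ≠ 0) {g : MvPolynomial (Fin 2) ℂ} (hg : Irreducible g) :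
    ∃ p, eval p g = 0 ∧ dualSection F p ≠ 0 := by
  by_contra! hcon
  let ι : Fin 2 → Fin 4 := ![0, 1]
  have hι : Function.Injective ι := by decide
  have hvan : ∀ v, eval v (rename ι g) = 0 → eval v F = 0 := by
    intro v hv
    rw [eval_rename] at hv
    have := congrArg (eval ![v 2, v 3]) (hcon _ hv)
    rw [eval_dualSection, map_zero] at this
    convert this using 2
    congr 1
    ext i
    fin_cases i <;> rfl
  obtain ⟨k, hk⟩ := dvd_pow_of_eval_eq_zero hvan
  obtain ⟨i, -, hi⟩ := (dvd_prime_pow hF.prime k).1 hk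
  have hF' : F ∣ rename ι g := by
    rcases Nat.eq_zero_or_pos i with rfl | hi0
    · exfalso
      rw [pow_zero, associated_one_iff_isUnit] at hi
      refine hg.not_isUnit ?_
      rw [MvPolynomial.isUnit_iff_eq_C_of_isReduced] at hi ⊢
      obtain ⟨r, hr, hr'⟩ := hi
      refine ⟨r, hr, rename_injective ι hι ?_⟩
      rw [hr', rename_C]
    · exact (dvd_pow_self F hi0.ne').trans hi.symm.dvd
  obtain ⟨u, hu⟩ := hF'
  have hg0 : rename ι g ≠ 0 := by
    rw [Ne, map_eq_zero_iff _ (rename_injective ι hι)]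
    exact hg.ne_zero
  have hu0 : u ≠ 0 := by rintro rfl; exact hg0 (by rw [hu, mul_zero])
  have h3 : degreeOf 2 (rename ι g) = 0 := by
    by_contra h
    rw [← Ne, ← mem_vars_iff_degreeOf_ne_zero] at h
    have := vars_rename ι g h
    simp only [Finset.mem_image] at this
    obtain ⟨j, -, hj⟩ := this
    fin_cases j <;> simp [ι] at hj
  rw [hu, degreeOf_mul_eq hF.ne_zero hu0] at h3
  exact degreeOf_ne_zero_of_pderiv_ne_zero h2 (by omega)

theorem exists_common_factor_of_card {F : MvPolynomial (Fin 4) ℂ} {Γ : Set (Fin 2 → ℂ)}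
    {p₀ : Fin 2 → ℂ} (hp₀ : p₀ ∈ Γ) (h0 : dualSection F p₀ ≠ 0) (Q : Finset (Fin 2 → ℂ))
    (hQ : F.totalDegree ^ 2 < Q.card) (hz : ∀ p ∈ Γ, ∀ q ∈ Q, eval q (dualSection F p) = 0) :
    ∃ f : MvPolynomial (Fin 2) ℂ, Irreducible f ∧ ∀ p ∈ Γ, f ∣ dualSection F p := by
  classical
  by_contra! hcon
  let W : Submodule ℂ (MvPolynomial (Fin 2) ℂ) := Submodule.span ℂ (dualSection F '' Γ)
  let s := (UniqueFactorizationMonoid.factors (dualSection F p₀)).toFinset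
  let S : s → Submodule ℂ W := fun f =>
    ((Ideal.span {f.1}).restrictScalars ℂ).comap W.subtype
  have hS : ⋃ f, (S f : Set W) ≠ Set.univ := by
    intro h
    obtain ⟨⟨f, hf⟩, hfS⟩ := Subspace.exists_eq_top_of_iUnion_eq_univ h
    have hirr : Irreducible f :=
      UniqueFactorizationMonoid.irreducible_of_factor f (Multiset.mem_toFinset.1 hf)
    obtain ⟨p, hp, hfp⟩ := hcon f hirr
    have : (⟨dualSection F p, Submodule.subset_span ⟨p, hp, rfl⟩⟩ : W) ∈ S ⟨f, hf⟩ := by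
      rw [hfS]; trivial
    exact hfp (Ideal.mem_span_singleton.1 this)
  obtain ⟨⟨w, hwW⟩, hw⟩ := (Set.ne_univ_iff_exists_notMem _).1 hS
  have hrel : IsRelPrime w (dualSection F p₀) := by
    intro d hdw hd0
    by_contra hu
    obtain ⟨f, hf, hfd⟩ := WfDvdMonoid.exists_irreducible_factor hu (ne_zero_of_dvd_ne_zero h0 hd0)
    obtain ⟨f', hf', hff'⟩ :=
      UniqueFactorizationMonoid.exists_mem_factors_of_dvd h0 hf (hfd.trans hd0)
    refine hw (Set.mem_iUnion.2 ⟨⟨f', Multiset.mem_toFinset.2 hf'⟩, ?_⟩)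
    exact Ideal.mem_span_singleton.2 ((hff'.symm.dvd.trans hfd).trans hdw)
  have hwQ : ∀ q ∈ Q, eval q w = 0 := by
    intro q hq
    have : W ≤ LinearMap.ker (aeval q : MvPolynomial (Fin 2) ℂ →ₐ[ℂ] ℂ).toLinearMap := by
      refine Submodule.span_le.2 ?_
      rintro _ ⟨p, hp, rfl⟩
      simpa [aeval_eq_eval] using hz p hp q hq
    simpa [aeval_eq_eval] using this hwW
  have hwd : w.totalDegree ≤ F.totalDegree := by
    have : W ≤ restrictTotalDegree (Fin 2) ℂ F.totalDegree := by
      refine Submodule.span_le.2 ?_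
      rintro _ ⟨p, hp, rfl⟩
      exact (mem_restrictTotalDegree _ _ _).2 (totalDegree_dualSection_le F p)
    exact (mem_restrictTotalDegree _ _ _).1 (this hwW)
  have := card_le_totalDegree_mul_of_isRelPrime h0 hrel Q
    fun q hq => ⟨hwQ q hq, hz p₀ hp₀ q hq⟩
  have h2 := Nat.mul_le_mul hwd (totalDegree_dualSection_le F p₀)
  rw [← sq] at h2
  omega

/-- The obstruction polynomial to the splitting `{i, j}`, `{k, l}` of the variables: on `F = 0`
it vanishes exactly when `F_i / F_j` does not change along the curves in the `k, l` plane. -/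
def splitPoly (i j k l : Fin 4) (F : MvPolynomial (Fin 4) ℂ) : MvPolynomial (Fin 4) ℂ :=
  pderiv l F * (pderiv j F * pderiv k (pderiv i F) - pderiv i F * pderiv k (pderiv j F)) -
    pderiv k F * (pderiv j F * pderiv l (pderiv i F) - pderiv i F * pderiv l (pderiv j F))

theorem totalDegree_pderiv_le {σ : Type*} (i : σ) (F : MvPolynomial σ ℂ) :
    (pderiv i F).totalDegree ≤ F.totalDegree - 1 := by
  classical
  rw [totalDegree, Finset.sup_le_iff]
  intro m hm
  rw [mem_support_iff, coeff_pderiv] at hm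
  have h1 : m + Finsupp.single i 1 ∈ F.support := by
    rw [mem_support_iff]; exact left_ne_zero_of_mul hm
  have h2 := le_totalDegree h1
  rw [Finsupp.sum_add_index' (fun _ => rfl) (fun _ _ _ => rfl),
    Finsupp.sum_single_index rfl] at h2
  omega

theorem totalDegree_splitPoly_le (i j k l : Fin 4) (F : MvPolynomial (Fin 4) ℂ) :
    (splitPoly i j k l F).totalDegree ≤ 3 * F.totalDegree := by
  have h1 : ∀ i, (pderiv i F).totalDegree ≤ F.totalDegree := fun i =>
    (totalDegree_pderiv_le i F).trans (Nat.sub_le _ _)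
  have h2 : ∀ i j, (pderiv i (pderiv j F)).totalDegree ≤ F.totalDegree := fun i j =>
    ((totalDegree_pderiv_le i _).trans (Nat.sub_le _ _)).trans (h1 j)
  have h3 : ∀ a b c : MvPolynomial (Fin 4) ℂ, a.totalDegree ≤ F.totalDegree →
      b.totalDegree ≤ F.totalDegree → c.totalDegree ≤ F.totalDegree →
      ∀ a' b', a'.totalDegree ≤ F.totalDegree → b'.totalDegree ≤ F.totalDegree →
      (c * (a * b - a' * b')).totalDegree ≤ 3 * F.totalDegree := by
    intro a b c ha hb hc a' b' ha' hb'
    have e1 := totalDegree_mul c (a * b - a' * b')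
    have e2 := totalDegree_sub (a * b) (a' * b')
    have e3 := totalDegree_mul a b
    have e4 := totalDegree_mul a' b'
    omega
  refine (totalDegree_sub _ _).trans (max_le ?_ ?_)
  · exact h3 _ _ _ (h1 _) (h2 _ _) (h1 _) _ _ (h1 _) (h2 _ _)
  · exact h3 _ _ _ (h1 _) (h2 _ _) (h1 _) _ _ (h1 _) (h2 _ _)

theorem eval_splitPoly_eq_zero_of_prod_subset {F : MvPolynomial (Fin 4) ℂ}
    {g f : MvPolynomial (Fin 2) ℂ} (hg : Irreducible g) (hf : Irreducible f)
    (h : ∀ p, eval p g = 0 → ∀ q, eval q f = 0 → eval ![p 0, p 1, q 0, q 1] F = 0)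
    {p q : Fin 2 → ℂ} (hp : eval p g = 0) (hq : eval q f = 0) :
    eval ![p 0, p 1, q 0, q 1] (splitPoly 0 1 2 3 F) = 0 := by
  have hgF : ∀ q, eval q f = 0 → ∃ v, ∀ p, eval p g = 0 →
      eval ![p 0, p 1, q 0, q 1] (pderiv 0 F) = eval p (pderiv 0 g) * eval p v ∧
      eval ![p 0, p 1, q 0, q 1] (pderiv 1 F) = eval p (pderiv 1 g) * eval p v := by
    intro q hq
    obtain ⟨v, hv⟩ := hg.dvd_of_eval_eq_zero (u := primalSection F q) fun p hp => by
      rw [eval_primalSection]; exact h p hp q hq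
    refine ⟨v, fun p hp => ⟨?_, ?_⟩⟩
    · rw [← eval_primalSection, ← pderiv_primalSection_zero, hv, pderiv_mul]
      simp [hp]
    · rw [← eval_primalSection, ← pderiv_primalSection_one, hv, pderiv_mul]
      simp [hp]
  obtain ⟨v, hv⟩ := hgF q hq
  obtain ⟨v1, v2⟩ := hv p hp
  obtain ⟨u, hu⟩ := hf.dvd_of_eval_eq_zero (u := dualSection F p) fun q hq => by
      rw [eval_dualSection]; exact h p hp q hq
  have u1 : eval ![p 0, p 1, q 0, q 1] (pderiv 2 F) = eval q (pderiv 0 f) * eval q u := by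
    rw [← eval_dualSection, ← pderiv_dualSection_zero, hu, pderiv_mul]
    simp [hq]
  have u2 : eval ![p 0, p 1, q 0, q 1] (pderiv 3 F) = eval q (pderiv 1 f) * eval q u := by
    rw [← eval_dualSection, ← pderiv_dualSection_one, hu, pderiv_mul]
    simp [hq]
  obtain ⟨w, hw⟩ := hf.dvd_of_eval_eq_zero
    (u := C (eval p (pderiv 1 g)) * dualSection (pderiv 0 F) p -
      C (eval p (pderiv 0 g)) * dualSection (pderiv 1 F) p) fun q hq => by
      obtain ⟨v, hv⟩ := hgF q hq
      obtain ⟨v1, v2⟩ := hv p hp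
      simp only [map_sub, map_mul, eval_C, eval_dualSection, v1, v2]
      ring
  have w1 := congrArg (fun a => eval q (pderiv 0 a)) hw
  have w2 := congrArg (fun a => eval q (pderiv 1 a)) hw
  simp only [map_sub, pderiv_mul, pderiv_C, pderiv_dualSection_zero, pderiv_dualSection_one,
    map_mul, map_add, eval_C, eval_dualSection, hq, zero_mul, add_zero, zero_add] at w1 w2
  simp only [splitPoly, map_sub, map_mul, v1, v2, u1, u2]
  linear_combination (eval q (pderiv 1 f) * eval q u * eval p v) * w1 -
    (eval q (pderiv 0 f) * eval q u * eval p v) * w2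

theorem infinite_image_zeros_or {f : MvPolynomial (Fin 2) ℂ} (hf : Irreducible f) :
    ((fun q : Fin 2 → ℂ => q 0) '' {q | eval q f = 0}).Infinite ∨
      ((fun q : Fin 2 → ℂ => q 1) '' {q | eval q f = 0}).Infinite := by
  by_contra! hcon
  have key : ∀ i j : Fin 2, i ≠ j → ((fun q : Fin 2 → ℂ => q i) '' {q | eval q f = 0}).Finite →
      degreeOf j f = 0 := by
    intro i j hij hfin
    have hdvd : f ∣ ∏ a ∈ hfin.toFinset, (X i - C a) := by
      refine hf.dvd_of_eval_eq_zero fun q hq => ?_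
      rw [map_prod]
      refine Finset.prod_eq_zero (i := q i) (hfin.mem_toFinset.2 ⟨q, hq, rfl⟩) (by simp)
    obtain ⟨a, -, ha⟩ := hf.prime.exists_mem_finset_dvd hdvd
    obtain ⟨u, hu⟩ := ha
    have hne : (X i - C a : MvPolynomial (Fin 2) ℂ) ≠ 0 := by
      intro h
      have := congrArg (eval fun _ => a + 1) h
      simp at this
    have hu0 : u ≠ 0 := by rintro rfl; exact hne (by rw [hu, mul_zero])
    have h1 : degreeOf j (X i - C a : MvPolynomial (Fin 2) ℂ) = 0 := by
      refine Nat.le_zero.1 ((degreeOf_sub_le _ _ _).trans ?_)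
      simp [degreeOf_X, Ne.symm hij]
    rw [hu, degreeOf_mul_eq hf.ne_zero hu0] at h1
    omega
  have h1 := key 0 1 (by decide) hcon.1
  have h0 := key 1 0 (by decide) hcon.2
  refine hf.not_isUnit ?_
  have : f.totalDegree = 0 := by
    rw [totalDegree_eq_zero_iff]
    intro m hm i
    have := degreeOf_le_iff.1 (show degreeOf i f ≤ 0 by fin_cases i <;> simp [h0, h1]) m hm
    omega
  rw [totalDegree_eq_zero_iff_eq_C] at this
  rw [MvPolynomial.isUnit_iff_eq_C_of_isReduced]
  refine ⟨_, ?_, this⟩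
  rw [isUnit_iff_ne_zero]
  intro h
  rw [h, C_0] at this
  exact hf.ne_zero this

theorem rename_splitPoly (σ : Equiv.Perm (Fin 4)) (i j k l : Fin 4)
    (F : MvPolynomial (Fin 4) ℂ) :
    splitPoly (σ i) (σ j) (σ k) (σ l) (rename σ F) = rename σ (splitPoly i j k l F) := by
  simp only [splitPoly, pderiv_rename σ.injective, map_sub, map_mul]

theorem rename_dvd_rename_iff (σ : Equiv.Perm (Fin 4)) {F H : MvPolynomial (Fin 4) ℂ} :
    rename σ F ∣ rename σ H ↔ F ∣ H :=
  map_dvd_iff (renameEquiv ℂ σ)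

theorem irreducible_rename_iff (σ : Equiv.Perm (Fin 4)) {F : MvPolynomial (Fin 4) ℂ} :
    Irreducible (rename σ F) ↔ Irreducible F :=
  MulEquiv.irreducible_iff (renameEquiv ℂ σ)

theorem pderiv_rename_ne_zero (σ : Equiv.Perm (Fin 4)) {F : MvPolynomial (Fin 4) ℂ}
    (h : ∀ i, pderiv i F ≠ 0) (i : Fin 4) : pderiv i (rename σ F) ≠ 0 := by
  obtain ⟨j, rfl⟩ := σ.surjective i
  rw [pderiv_rename σ.injective, Ne, rename_eq_zero_iff_of_injective _ σ.injective]
  exact h j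

theorem exists_double_eliminant_perm (τ : Equiv.Perm (Fin 4)) {F H : MvPolynomial (Fin 4) ℂ}
    (hF : Irreducible F) (hd : ∀ i, pderiv i F ≠ 0) (hFH : ¬ F ∣ H) {e : ℕ}
    (hFe : F.totalDegree ≤ e) (hHe : H.totalDegree ≤ e) :
    ∃ r : MvPolynomial (Fin 2) ℂ, r ≠ 0 ∧ r.totalDegree ≤ 2 * e * e ∧
      ∀ a b : ℂ, {t : ℂ | ∃ s : ℂ, eval (![s, t, a, b] ∘ τ) F = 0 ∧
        eval (![s, t, a, b] ∘ τ) H = 0}.Infinite → eval ![a, b] r = 0 := by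
  simp only [← eval_rename]
  exact exists_double_eliminant ((irreducible_rename_iff τ).2 hF) (pderiv_rename_ne_zero τ hd 0)
    ((rename_dvd_rename_iff τ).not.2 hFH) ((totalDegree_rename_le _ _).trans hFe)
    ((totalDegree_rename_le _ _).trans hHe)

theorem card_factors_le_totalDegree {r : MvPolynomial (Fin 2) ℂ} (hr : r ≠ 0) :
    (UniqueFactorizationMonoid.factors r).card ≤ r.totalDegree := by
  have h1 : ∀ f ∈ UniqueFactorizationMonoid.factors r, 1 ≤ f.totalDegree := by
    intro f hf
    have hf' := UniqueFactorizationMonoid.irreducible_of_factor f hf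
    by_contra! h0
    have h0 : f.totalDegree = 0 := by omega
    rw [totalDegree_eq_zero_iff_eq_C] at h0
    refine hf'.not_isUnit ?_
    rw [h0]
    refine (isUnit_iff_ne_zero.2 fun h => hf'.ne_zero ?_).map C
    rw [h0, h, C_0]
  have h2 : ∀ m : Multiset (MvPolynomial (Fin 2) ℂ), (∀ f ∈ m, f ≠ 0 ∧ 1 ≤ f.totalDegree) →
      m.card ≤ m.prod.totalDegree := by
    intro m
    induction m using Multiset.induction with
    | empty => simp
    | cons a m ih =>
      intro h
      have h3 := ih fun f hf => h f (Multiset.mem_cons_of_mem hf)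
      have h4 := h a (Multiset.mem_cons_self a m)
      rw [Multiset.prod_cons, totalDegree_mul_of_isDomain h4.1, Multiset.card_cons]
      · omega
      · exact Multiset.prod_ne_zero fun h0 => (h 0 (Multiset.mem_cons_of_mem h0)).1 rfl
  obtain ⟨u, hu⟩ := UniqueFactorizationMonoid.factors_prod hr
  have hprod : (UniqueFactorizationMonoid.factors r).prod ≠ 0 := by
    intro h; rw [h, zero_mul] at hu; exact hr hu.symm
  calc _ ≤ (UniqueFactorizationMonoid.factors r).prod.totalDegree :=
        h2 _ fun f hf => ⟨(UniqueFactorizationMonoid.irreducible_of_factor f hf).ne_zero, h1 f hf⟩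
    _ ≤ ((UniqueFactorizationMonoid.factors r).prod * u).totalDegree := by
        rw [totalDegree_mul_of_isDomain hprod u.ne_zero]
        exact Nat.le_add_right _ _
    _ = r.totalDegree := by rw [hu]

/-- If the obstruction polynomial is not a multiple of `F`, then the irreducible curves `γ` such
that `γ × γ' ⊆ Z(F)` for some curve `γ'` are components of a curve of bounded degree. -/
theorem exists_curve_of_not_dvd_splitPoly {F : MvPolynomial (Fin 4) ℂ} (hF : Irreducible F)
    (hd : ∀ i, pderiv i F ≠ 0) (hs : ¬ F ∣ splitPoly 0 1 2 3 F) :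
    ∃ r : MvPolynomial (Fin 2) ℂ, r ≠ 0 ∧ r.totalDegree ≤ 36 * F.totalDegree ^ 2 ∧
      ∀ g f : MvPolynomial (Fin 2) ℂ, Irreducible g → Irreducible f →
        (∀ p, eval p g = 0 → ∀ q, eval q f = 0 → eval ![p 0, p 1, q 0, q 1] F = 0) → g ∣ r := by
  have hFe : F.totalDegree ≤ 3 * F.totalDegree := by omega
  obtain ⟨r₁, hr₁, hd₁, h₁⟩ := exists_double_eliminant_perm
    ⟨![2, 3, 0, 1], ![2, 3, 0, 1], by decide, by decide⟩ hF hd hs hFe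
    (totalDegree_splitPoly_le 0 1 2 3 F)
  obtain ⟨r₂, hr₂, hd₂, h₂⟩ := exists_double_eliminant_perm
    ⟨![2, 3, 1, 0], ![3, 2, 0, 1], by decide, by decide⟩ hF hd hs hFe
    (totalDegree_splitPoly_le 0 1 2 3 F)
  have e₁ : ∀ s t a b : ℂ, ![s, t, a, b] ∘ (⟨![2, 3, 0, 1], ![2, 3, 0, 1], by decide, by decide⟩ :
      Equiv.Perm (Fin 4)) = ![a, b, s, t] := by
    intro s t a b; funext i; fin_cases i <;> rfl
  have e₂ : ∀ s t a b : ℂ, ![s, t, a, b] ∘ (⟨![2, 3, 1, 0], ![3, 2, 0, 1], by decide, by decide⟩ :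
      Equiv.Perm (Fin 4)) = ![a, b, t, s] := by
    intro s t a b; funext i; fin_cases i <;> rfl
  simp only [e₁] at h₁
  simp only [e₂] at h₂
  refine ⟨r₁ * r₂, mul_ne_zero hr₁ hr₂, (totalDegree_mul _ _).trans ?_, ?_⟩
  · nlinarith
  intro g f hg hf h
  refine hg.dvd_of_eval_eq_zero fun p hp => ?_
  have hp' : p = ![p 0, p 1] := by funext i; fin_cases i <;> rfl
  rw [map_mul, mul_eq_zero]
  rcases infinite_image_zeros_or hf with hinf | hinf
  · right
    rw [hp']
    refine h₂ _ _ (hinf.mono ?_)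
    rintro _ ⟨q, hq, rfl⟩
    exact ⟨q 1, h p hp q hq, eval_splitPoly_eq_zero_of_prod_subset hg hf h hp hq⟩
  · left
    rw [hp']
    refine h₁ _ _ (hinf.mono ?_)
    rintro _ ⟨q, hq, rfl⟩
    exact ⟨q 0, h p hp q hq, eval_splitPoly_eq_zero_of_prod_subset hg hf h hp hq⟩

theorem exists_curve_avoiding_popular {F : MvPolynomial (Fin 4) ℂ} (hF : Irreducible F)
    (hd : ∀ i, pderiv i F ≠ 0) (hs : ¬ F ∣ splitPoly 0 1 2 3 F) :
    ∃ g : MvPolynomial (Fin 2) ℂ, g ≠ 0 ∧ g.totalDegree ≤ 37 * F.totalDegree ^ 4 ∧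
      TT F ⊆ {p : ℂ × ℂ | ev2 g p = 0} ∧
      ∀ q : ℂ × ℂ, ev2 g q ≠ 0 →
        ¬ ∃ γ : Set (ℂ × ℂ), IsPopular F F.totalDegree γ ∧ γ ⊆ curveOf F q.1 q.2 := by
  classical
  obtain ⟨r, hr0, hrd, hr⟩ := exists_curve_of_not_dvd_splitPoly hF hd hs
  have hsec : ∀ g : MvPolynomial (Fin 2) ℂ, ∃ p, Irreducible g →
      eval p g = 0 ∧ dualSection F p ≠ 0 := by
    intro g
    by_cases hg : Irreducible g
    · obtain ⟨p, hp⟩ := exists_dualSection_ne_zero hF (hd 2) hg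
      exact ⟨p, fun _ => hp⟩
    · exact ⟨0, fun h => absurd h hg⟩
  choose P hP using hsec
  have hX : Irreducible (X 0 : MvPolynomial (Fin 2) ℂ) := X_prime.irreducible
  set m := (UniqueFactorizationMonoid.factors r).map fun g => dualSection F (P g) with hm
  have hm0 : m.prod ≠ 0 := by
    refine Multiset.prod_ne_zero fun h => ?_
    obtain ⟨g, hg, hg0⟩ := Multiset.mem_map.1 h
    exact (hP g (UniqueFactorizationMonoid.irreducible_of_factor g hg)).2 hg0
  have hmd : m.prod.totalDegree ≤ 36 * F.totalDegree ^ 2 * F.totalDegree := by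
    refine (totalDegree_multiset_prod m).trans ?_
    have := Multiset.sum_le_card_nsmul (m.map totalDegree) F.totalDegree (by
      intro x hx
      obtain ⟨y, hy, rfl⟩ := Multiset.mem_map.1 hx
      obtain ⟨g, hg, rfl⟩ := Multiset.mem_map.1 hy
      exact totalDegree_dualSection_le _ _)
    rw [Multiset.card_map, hm, Multiset.card_map, smul_eq_mul] at this
    exact this.trans (Nat.mul_le_mul_right _ ((card_factors_le_totalDegree hr0).trans hrd))
  have hδ : 1 ≤ F.totalDegree := by
    have h := degreeOf_ne_zero_of_pderiv_ne_zero (hd 0)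
    have := degreeOf_le_totalDegree F 0
    omega
  refine ⟨dualSection F (P (X 0)) * m.prod, mul_ne_zero (hP _ hX).2 hm0, ?_, ?_, ?_⟩
  · have h1 := totalDegree_mul (dualSection F (P (X 0))) m.prod
    have h2 := totalDegree_dualSection_le F (P (X 0))
    have h3 : F.totalDegree ^ 3 ≤ F.totalDegree ^ 4 := Nat.pow_le_pow_right hδ (by norm_num)
    have h4 : F.totalDegree ^ 1 ≤ F.totalDegree ^ 4 := Nat.pow_le_pow_right hδ (by norm_num)
    rw [pow_one] at h4
    have h5 : 36 * F.totalDegree ^ 2 * F.totalDegree = 36 * F.totalDegree ^ 3 := by ring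
    omega
  · intro q hq
    have := hq (P (X 0) 0) (P (X 0) 1)
    simp only [Set.mem_ofPred_eq, ev2, map_mul, eval_dualSection, mul_eq_zero]
    exact Or.inl this
  · rintro q hq ⟨γ, ⟨⟨g, hg, rfl⟩, Q, hQ, hQγ⟩, hγ⟩
    have hz : ∀ p, eval p g = 0 → ∀ q ∈ Q.image fun q : ℂ × ℂ => ![q.1, q.2],
        eval q (dualSection F p) = 0 := by
      intro p hp q hq
      obtain ⟨q', hq', rfl⟩ := Finset.mem_image.1 hq
      rw [eval_dualSection]
      refine @(hQγ q' hq').2 (p 0, p 1) ?_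
      have hp' : p = ![p 0, p 1] := by funext i; fin_cases i <;> rfl
      rw [Set.mem_ofPred_eq, ev2, ← hp', hp]
    have hcard : (Q.image fun q : ℂ × ℂ => ![q.1, q.2]).card = Q.card := by
      refine Finset.card_image_of_injective _ fun a b hab => ?_
      have h0 := congrFun hab 0
      have h1 := congrFun hab 1
      exact Prod.ext h0 h1
    obtain ⟨f, hf, hfF⟩ := exists_common_factor_of_card (F := F) (Γ := {p | eval p g = 0})
      (hP g hg).1 (hP g hg).2 _ (by rw [hcard]; omega) hz
    have hgr : g ∣ r := hr g f hg hf fun p hp q hq => by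
      obtain ⟨u, hu⟩ := hfF p hp
      rw [← eval_dualSection, hu, map_mul, hq, zero_mul]
    obtain ⟨g', hg', hgg'⟩ := UniqueFactorizationMonoid.exists_mem_factors_of_dvd hr0 hg hgr
    have hg'irr := UniqueFactorizationMonoid.irreducible_of_factor g' hg'
    have hPg : eval (P g') g = 0 := by
      obtain ⟨u, hu⟩ := hgg'.symm.dvd
      rw [hu, map_mul, (hP g' hg'irr).1, zero_mul]
    have hP' : P g' = ![P g' 0, P g' 1] := by funext i; fin_cases i <;> rfl
    have h0 : (P g' 0, P g' 1) ∈ curveOf F q.1 q.2 := by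
      refine hγ ?_
      rw [Set.mem_ofPred_eq, ev2, ← hP', hPg]
    refine hq ?_
    have h1 : dualSection F (P g') ∣ m.prod :=
      Multiset.dvd_prod (Multiset.mem_map_of_mem _ hg')
    obtain ⟨u, hu⟩ := h1
    rw [ev2, map_mul, hu, map_mul, eval_dualSection F (P g')]
    have h0' : eval ![P g' 0, P g' 1, q.1, q.2] F = 0 := h0
    simp [h0']

theorem pderiv_pderiv_comm {σ : Type*} (i j : σ) (F : MvPolynomial σ ℂ) :
    pderiv i (pderiv j F) = pderiv j (pderiv i F) := by
  classical
  ext m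
  simp only [coeff_pderiv, Finsupp.add_apply, Finsupp.single_apply]
  rw [add_right_comm]
  by_cases h : i = j
  · subst h; rfl
  · simp [h, Ne.symm h]; ring

theorem splitPoly_comm (i j k l : Fin 4) (F : MvPolynomial (Fin 4) ℂ) :
    splitPoly k l i j F = splitPoly i j k l F := by
  simp only [splitPoly, pderiv_pderiv_comm i k, pderiv_pderiv_comm i l, pderiv_pderiv_comm j k,
    pderiv_pderiv_comm j l]
  ring

theorem goodSplit_of_not_dvd_splitPoly {F : MvPolynomial (Fin 4) ℂ} (hF : Irreducible F)
    (hd : ∀ i, pderiv i F ≠ 0) (hs : ¬ F ∣ splitPoly 0 1 2 3 F) :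
    GoodSplit 37 F.totalDegree F := by
  constructor
  · obtain ⟨g, hg0, hgd, hT, hg⟩ := exists_curve_avoiding_popular hF hd hs
    refine ⟨g, ∅, hg0, by exact_mod_cast hgd, by simp, ?_, fun q hq => hg q fun h => ?_⟩
    · exact hT.trans Set.subset_union_left
    · exact hq (Or.inl h)
  · let τ : Equiv.Perm (Fin 4) := ⟨![2, 3, 0, 1], ![2, 3, 0, 1], by decide, by decide⟩
    have hev : ∀ x y s t : ℂ, ev4 (rename τ F) x y s t = ev4 F s t x y := by
      intro x y s t
      rw [ev4, ev4, eval_rename]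
      congr 1
      congr 1
      funext i; fin_cases i <;> rfl
    have hs' : ¬ rename τ F ∣ splitPoly 0 1 2 3 (rename τ F) := by
      rwa [show splitPoly 0 1 2 3 (rename τ F) = rename τ (splitPoly 0 1 2 3 F) by
        rw [← rename_splitPoly, ← splitPoly_comm]; rfl, rename_dvd_rename_iff]
    obtain ⟨g, hg0, hgd, hT, hg⟩ := exists_curve_avoiding_popular
      ((irreducible_rename_iff τ).2 hF) (pderiv_rename_ne_zero τ hd) hs'
    have hdeg : (rename τ F).totalDegree = F.totalDegree := totalDegree_renameEquiv τ F
    have hTS : TT (rename τ F) = SS F := by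
      ext p; simp only [TT, SS, hev]
    have hc : ∀ a b, curveOf (rename τ F) a b = dualCurveOf F a b := by
      intro a b; simp only [curveOf, dualCurveOf, hev]
    rw [hdeg] at hgd
    simp only [IsPopular, hTS, hc, hdeg] at hT hg
    refine ⟨g, ∅, hg0, by exact_mod_cast hgd, by simp, ?_, fun q hq => hg q fun h => ?_⟩
    · exact hT.trans Set.subset_union_left
    · exact hq (Or.inl h)

theorem goodSplit_or_dvd_splitPoly {F : MvPolynomial (Fin 4) ℂ} (hF : Irreducible F)
    (hd : ∀ i, pderiv i F ≠ 0) :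
    (∃ σ : Equiv.Perm (Fin 4),
        σ ∈ ({Equiv.refl (Fin 4), Equiv.swap 0 2, Equiv.swap 0 3} : Set (Equiv.Perm (Fin 4))) ∧
        GoodSplit 37 F.totalDegree (rename σ F)) ∨
      F ∣ splitPoly 0 1 2 3 F ∧ F ∣ splitPoly 2 1 0 3 F ∧ F ∣ splitPoly 3 1 2 0 F := by
  have key : ∀ σ : Equiv.Perm (Fin 4), ¬ F ∣ splitPoly (σ 0) (σ 1) (σ 2) (σ 3) F → σ * σ = 1 →
      GoodSplit 37 F.totalDegree (rename σ F) := by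
    intro σ h hσ
    have hσ' : ∀ i, σ (σ i) = i := fun i => by
      rw [← Equiv.Perm.mul_apply, hσ, Equiv.Perm.one_apply]
    have := goodSplit_of_not_dvd_splitPoly ((irreducible_rename_iff σ).2 hF)
      (pderiv_rename_ne_zero σ hd) (by
        rw [← rename_dvd_rename_iff σ, ← rename_splitPoly] at h
        simpa only [hσ'] using h)
    rwa [show (rename σ F).totalDegree = F.totalDegree from totalDegree_renameEquiv σ F] at this
  by_contra! hcon
  obtain ⟨h1, h2⟩ := hcon
  refine h2 ?_ ?_ ?_
  · by_contra h
    exact h1 (Equiv.refl _) (by simp) (key _ h rfl)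
  · by_contra h
    exact h1 (Equiv.swap 0 2) (by simp) (key _ h (Equiv.swap_mul_self _ _))
  · by_contra h
    exact h1 (Equiv.swap 0 3) (by simp) (key _ h (Equiv.swap_mul_self _ _))

theorem IsIrredAlgSet.isPrime_vanishingIdeal {n : ℕ} {S : Set (Fin n → ℂ)}
    (hS : IsIrredAlgSet S) : (vanishingIdeal ℂ S).IsPrime := by
  obtain ⟨⟨I, rfl⟩, hne, hirr⟩ := hS
  refine ⟨fun h => ?_, fun {f g} hfg => ?_⟩
  · obtain ⟨p, hp⟩ := hne
    have := (mem_vanishingIdeal_iff (k := ℂ)).1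
      (h ▸ Submodule.mem_top (x := (1 : MvPolynomial (Fin n) ℂ))) p hp
    simp at this
  · simp only [mem_vanishingIdeal_iff, aeval_eq_eval, map_mul, mul_eq_zero] at hfg ⊢
    have key : ∀ f : MvPolynomial (Fin n) ℂ, zeroSetOf I = zeroSetOf (I ∪ {f}) →
        ∀ p ∈ zeroSetOf I, eval p f = 0 := by
      intro f hf p hp
      rw [hf] at hp
      exact hp f (Or.inr rfl)
    refine (hirr _ _ ⟨I ∪ {f}, rfl⟩ ⟨I ∪ {g}, rfl⟩ ?_).imp (key f) (key g)
    ext p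
    constructor
    · intro hp
      refine (hfg p hp).imp (fun h => ?_) (fun h => ?_)
      all_goals
        rintro e (he | rfl)
        · exact hp e he
        · exact h
    · rintro (hp | hp)
      all_goals exact fun e he => hp e (Or.inl he)

theorem vanishingIdeal_lt_of_ssubset {n : ℕ} {S T : Set (Fin n → ℂ)} (hS : IsAlgSet S)
    (h : S ⊂ T) : vanishingIdeal ℂ T < vanishingIdeal ℂ S := by
  obtain ⟨I, rfl⟩ := hS
  refine lt_of_le_not_ge (fun f hf => ?_) fun hle => h.2 fun p hp f hf => ?_
  · rw [mem_vanishingIdeal_iff] at hf ⊢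
    exact fun p hp => hf p (h.1 hp)
  · have := (mem_vanishingIdeal_iff (k := ℂ)).1 (hle ((mem_vanishingIdeal_iff).2 fun q hq => by
      rw [aeval_eq_eval]; exact hq f hf)) p hp
    rwa [aeval_eq_eval] at this

theorem not_dvd_pderiv {σ : Type*} [Finite σ] {F : MvPolynomial σ ℂ} {i : σ}
    (h : pderiv i F ≠ 0) : ¬ F ∣ pderiv i F := by
  rintro ⟨u, hu⟩
  have hF0 : F ≠ 0 := by rintro rfl; simp at h
  have hu0 : u ≠ 0 := by rintro rfl; simp [hu] at h
  have h1 := totalDegree_pderiv_le i F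
  have h2 := totalDegree_mul_of_isDomain hF0 hu0
  rw [← hu] at h2
  have h3 : F.totalDegree = 0 := by omega
  rw [totalDegree_eq_zero_iff_eq_C] at h3
  rw [h3, pderiv_C] at h
  exact h rfl

/-- The zeros of `F` at which some partial derivative of `F` vanishes. -/
def criticalZeros (F : MvPolynomial (Fin 4) ℂ) : Set (Fin 4 → ℂ) :=
  zeroSetOf {F, ∏ i, pderiv i F}

theorem algDimLE_criticalZeros {F : MvPolynomial (Fin 4) ℂ} (hF : Irreducible F)
    (hd : ∀ i, pderiv i F ≠ 0) : algDimLE (criticalZeros F) 2 := by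
  intro Z hZ hmono
  let I : Fin 4 → PrimeSpectrum (MvPolynomial (Fin 4) ℂ) := fun i =>
    ⟨vanishingIdeal ℂ (Z i), (hZ i).1.isPrime_vanishingIdeal⟩
  have hI : ∀ i j, i < j → I j < I i := fun i j hij =>
    vanishingIdeal_lt_of_ssubset (hZ i).1.1 (hmono hij)
  let J : PrimeSpectrum (MvPolynomial (Fin 4) ℂ) :=
    ⟨Ideal.span {F}, (Ideal.span_singleton_prime hF.ne_zero).2 hF.prime⟩
  let O : PrimeSpectrum (MvPolynomial (Fin 4) ℂ) := ⟨⊥, Ideal.isPrime_bot⟩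
  have hOJ : O < J := by
    change (⊥ : Ideal (MvPolynomial (Fin 4) ℂ)) < Ideal.span {F}
    exact bot_lt_iff_ne_bot.2 fun h => hF.ne_zero (Ideal.span_singleton_eq_bot.1 h)
  have hJI : J < I 3 := by
    refine lt_of_le_not_ge ?_ fun h => ?_
    · refine (Ideal.span_singleton_le_iff_mem _).2 ((mem_vanishingIdeal_iff).2 fun p hp => ?_)
      rw [aeval_eq_eval]
      exact (hZ 3).2 hp F (Or.inl rfl)
    · have : ∏ i, pderiv i F ∈ Ideal.span {F} := h ((mem_vanishingIdeal_iff).2 fun p hp => by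
        rw [aeval_eq_eval]
        exact (hZ 3).2 hp _ (Or.inr rfl))
      obtain ⟨i, -, hi⟩ := hF.prime.exists_mem_finset_dvd (Ideal.mem_span_singleton.1 this)
      exact not_dvd_pderiv (hd i) hi
  let l : LTSeries (PrimeSpectrum (MvPolynomial (Fin 4) ℂ)) :=
    { length := 5
      toFun := ![O, J, I 3, I 2, I 1, I 0]
      step := by
        intro i
        fin_cases i
        · exact hOJ
        · exact hJI
        · exact hI 2 3 (by decide)
        · exact hI 1 2 (by decide)
        · exact hI 0 1 (by decide) }
  have h1 : ((5 : ℕ) : WithBot ℕ∞) ≤ ringKrullDim (MvPolynomial (Fin 4) ℂ) :=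
    Order.LTSeries.length_le_krullDim l
  rw [MvPolynomial.ringKrullDim_of_isNoetherianRing, ringKrullDim_eq_zero_of_field, zero_add,
    Nat.card_eq_fintype_card, Fintype.card_fin] at h1
  exact absurd (Nat.cast_le.1 h1) (by norm_num)

theorem hasDerivAt_eval_curve {σ : Type*} [Fintype σ] (G : MvPolynomial σ ℂ)
    {c : ℂ → σ → ℂ} {c' : σ → ℂ} {u : ℂ} (hc : ∀ m, HasDerivAt (fun z => c z m) (c' m) u) :
    HasDerivAt (fun z => eval (c z) G) (∑ m, eval (c u) (pderiv m G) * c' m) u := by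
  classical
  induction G using MvPolynomial.induction_on with
  | C a => simpa using hasDerivAt_const u a
  | add p q hp hq =>
    simpa [add_mul, Finset.sum_add_distrib] using hp.fun_add hq
  | mul_X p m hp =>
    have h := hp.mul (hc m)
    simp only [map_mul, eval_X]
    refine h.congr_deriv ?_
    simp only [pderiv_mul, pderiv_X, map_add, map_mul, eval_X, add_mul, Finset.sum_add_distrib,
      Finset.sum_mul]
    congr 1
    · exact Finset.sum_congr rfl fun _ _ => by ring
    · rw [Finset.sum_eq_single m]
      · simp
      · intro b _ hb; simp [hb]
      · simp

theorem isInvertible_of_apply_one_ne_zero {A : ℂ →L[ℂ] ℂ} (h : A 1 ≠ 0) : A.IsInvertible := by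
  refine ⟨ContinuousLinearEquiv.unitsEquivAut ℂ (Units.mk0 _ h), ?_⟩
  ext
  simp

/-- Near a zero of `F` with `F_l ≠ 0` the zero set is a graph over the other coordinates. -/
theorem exists_graph {F : MvPolynomial (Fin 4) ℂ} {v : Fin 4 → ℂ} {l : Fin 4}
    (hv : eval v F = 0) (hl : eval v (pderiv l F) ≠ 0) :
    ∃ h : (Fin 4 → ℂ) → ℂ, h v = v l ∧ ∀ r > 0, ∃ ε > 0, ε ≤ r ∧ ∀ w ∈ Metric.ball v ε,
      DifferentiableAt ℂ h w ∧ Function.update w l (h w) ∈ Metric.ball v r ∧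
      eval (Function.update w l (h w)) F = 0 ∧
      ∀ z ∈ Metric.ball (v l) ε, eval (Function.update w l z) F = 0 → h w = z := by
  let f : (Fin 4 → ℂ) × ℂ → ℂ := fun q => eval (Function.update q.1 l q.2) F
  have hfa : ContDiffAt ℂ 1 f (v, v l) := by
    refine AnalyticAt.contDiffAt ?_
    have := AnalyticAt.aeval_mvPolynomial (𝕜 := ℂ) (z := (v, v l))
      (f := fun (q : (Fin 4 → ℂ) × ℂ) => Function.update q.1 l q.2) (fun i => by
        by_cases hi : i = l
        · subst hi
          simpa using analyticAt_snd
        · simp only [Function.update_of_ne hi]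
          exact ((ContinuousLinearMap.proj (R := ℂ) (φ := fun _ : Fin 4 => ℂ) i).comp
            (ContinuousLinearMap.fst ℂ (Fin 4 → ℂ) ℂ)).analyticAt _) F
    simpa only [aeval_eq_eval] using this
  have hfv : f (v, v l) = 0 := by simp [f, hv]
  have hinv : (fderiv ℂ f (v, v l) ∘L .inr ℂ (Fin 4 → ℂ) ℂ).IsInvertible := by
    refine isInvertible_of_apply_one_ne_zero ?_
    have h1 : HasDerivAt (fun z => f (v, z)) (eval v (pderiv l F)) (v l) := by
      have := hasDerivAt_eval_curve (u := v l) F (c := fun z => Function.update v l z)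
        (c' := Pi.single l 1) (fun m => by
          by_cases hm : m = l
          · subst hm; simpa using hasDerivAt_id' (v m)
          · simpa [hm] using hasDerivAt_const (v l) (v m))
      refine this.congr_deriv ?_
      simp [Pi.single_apply]
    have h2 : HasDerivAt (fun z => f (v, z)) (fderiv ℂ f (v, v l) (0, 1)) (v l) :=
      (hfa.differentiableAt one_ne_zero).hasFDerivAt.comp_hasDerivAt (v l)
        ((hasDerivAt_const (v l) v).prodMk (hasDerivAt_id (v l)))
    simpa [h2.unique h1] using hl
  let h := hfa.implicitFunction one_ne_zero hinv
  have hhv : h v = v l := hfa.implicitFunction_apply_self one_ne_zero hinv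
  have hd : ∀ᶠ w in 𝓝 v, DifferentiableAt ℂ h w := by
    have h1 : ContDiffAt ℂ 1 h v := hfa.contDiffAt_implicitFunction one_ne_zero hinv
    filter_upwards [h1.eventually (by simp)] with w hw
    exact hw.differentiableAt one_ne_zero
  have hz : ∀ᶠ w in 𝓝 v, f (w, h w) = f (v, v l) :=
    hfa.eventually_apply_implicitFunction one_ne_zero hinv
  have hu : ∀ᶠ q in 𝓝 (v, v l), f q = f (v, v l) ↔ h q.1 = q.2 :=
    hfa.eventually_apply_eq_iff_implicitFunction one_ne_zero hinv
  refine ⟨h, hhv, fun r hr => ?_⟩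
  have hc : ∀ᶠ w in 𝓝 v, Function.update w l (h w) ∈ Metric.ball v r := by
    have h1 : ContinuousAt (fun w => Function.update w l (h w)) v :=
      continuousAt_id.update l hd.self_of_nhds.continuousAt
    refine h1.eventually_mem (Metric.isOpen_ball.mem_nhds ?_)
    simp [hhv, hr]
  obtain ⟨ε₁, hε₁, h₁⟩ := Metric.eventually_nhds_iff_ball.1 (hd.and (hz.and hc))
  obtain ⟨ε₂, hε₂, h₂⟩ := Metric.eventually_nhds_iff_ball.1 hu
  refine ⟨min r (min ε₁ ε₂), by positivity, min_le_left _ _, fun w hw => ?_⟩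
  have hw₁ : w ∈ Metric.ball v ε₁ := Metric.ball_subset_ball (by simp) hw
  have hw₂ : w ∈ Metric.ball v ε₂ := Metric.ball_subset_ball (by simp) hw
  obtain ⟨a1, a2, a3⟩ := h₁ w hw₁
  refine ⟨a1, a3, by rw [hfv] at a2; exact a2, fun z hz hzF => ?_⟩
  have hz₂ : z ∈ Metric.ball (v l) ε₂ := Metric.ball_subset_ball (by simp) hz
  refine (h₂ (w, z) ?_).1 (by rw [hfv]; exact hzF)
  rw [Metric.mem_ball, Prod.dist_eq, max_lt_iff]
  exact ⟨hw₂, hz₂⟩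

theorem update_mem_ball {v w : Fin 4 → ℂ} {ε : ℝ} (hw : w ∈ Metric.ball v ε) {k : Fin 4} {z : ℂ}
    (hz : z ∈ Metric.ball (v k) ε) : Function.update w k z ∈ Metric.ball v ε := by
  have hε : 0 < ε := Metric.pos_of_mem_ball hw
  rw [Metric.mem_ball, dist_pi_lt_iff hε]
  intro i
  by_cases hi : i = k
  · subst hi; simpa using hz
  · rw [Function.update_of_ne hi]
    exact (dist_pi_lt_iff hε).1 hw i

theorem apply_mem_ball {v w : Fin 4 → ℂ} {ε : ℝ} (hw : w ∈ Metric.ball v ε) (k : Fin 4) :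
    w k ∈ Metric.ball (v k) ε :=
  (dist_pi_lt_iff (Metric.pos_of_mem_ball hw)).1 hw k

theorem exists_ball_pderiv_ne_zero {F : MvPolynomial (Fin 4) ℂ} {v : Fin 4 → ℂ}
    (hd : ∀ i, eval v (pderiv i F) ≠ 0) :
    ∃ r > 0, ∀ w ∈ Metric.ball v r, ∀ i, eval w (pderiv i F) ≠ 0 := by
  refine Metric.eventually_nhds_iff_ball.1 (Filter.eventually_all.2 fun i => ?_)
  exact (MvPolynomial.continuous_eval (pderiv i F)).continuousAt.eventually_ne (hd i)

/-- Divisibility of the obstruction polynomial by `F` means that near `v` the ratio `F_i / F_j`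
on `Z(F)` is a function of the coordinates `i` and `j`. -/
theorem exists_ball_ratio_eq {F : MvPolynomial (Fin 4) ℂ} {v : Fin 4 → ℂ} (hv : eval v F = 0)
    (hd : ∀ i, eval v (pderiv i F) ≠ 0) {i j k l : Fin 4} (hkl : k ≠ l)
    (hijkl : ∀ m, m = i ∨ m = j ∨ m = k ∨ m = l) (hdvd : F ∣ splitPoly i j k l F) :
    ∃ ε > 0, ∀ w ∈ Metric.ball v ε, ∀ w' ∈ Metric.ball v ε, eval w F = 0 → eval w' F = 0 →
      w i = w' i → w j = w' j →
      eval w (pderiv i F) / eval w (pderiv j F) = eval w' (pderiv i F) / eval w' (pderiv j F) := by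
  obtain ⟨h, -, hh⟩ := exists_graph hv (hd l)
  obtain ⟨r, hr, hne⟩ := exists_ball_pderiv_ne_zero hd
  obtain ⟨ε, hε, -, hε'⟩ := hh r hr
  refine ⟨ε, hε, fun w hw w' hw' hwF hw'F hi hj => ?_⟩
  let c : ℂ → Fin 4 → ℂ := fun u =>
    Function.update (Function.update w k u) l (h (Function.update w k u))
  have hmem : ∀ u ∈ Metric.ball (v k) ε, Function.update w k u ∈ Metric.ball v ε :=
    fun u hu => update_mem_ball hw hu
  have hc : ∀ u ∈ Metric.ball (v k) ε, ∃ η : ℂ,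
      ∀ m, HasDerivAt (fun z => c z m) ((Pi.single k 1 + Pi.single l η : Fin 4 → ℂ) m) u := by
    intro u hu
    have h1 : DifferentiableAt ℂ (fun z => h (Function.update w k z)) u := by
      refine (hε' _ (hmem u hu)).1.comp u ?_
      exact (hasFDerivAt_update w u).differentiableAt
    refine ⟨deriv (fun z => h (Function.update w k z)) u, fun m => ?_⟩
    by_cases hm : m = l
    · subst hm
      simpa [c, hkl.symm] using h1.hasDerivAt
    · by_cases hmk : m = k
      · subst hmk
        simpa [c, hm] using hasDerivAt_id' u
      · simpa [c, hm, hmk] using hasDerivAt_const u (w m)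
  have hF0 : ∀ u ∈ Metric.ball (v k) ε, eval (c u) F = 0 := fun u hu => (hε' _ (hmem u hu)).2.2.1
  have hFn : ∀ u ∈ Metric.ball (v k) ε, ∀ m, eval (c u) (pderiv m F) ≠ 0 := fun u hu =>
    hne _ (hε' _ (hmem u hu)).2.1
  have hder : ∀ u ∈ Metric.ball (v k) ε,
      HasDerivAt (fun u => eval (c u) (pderiv i F) / eval (c u) (pderiv j F)) 0 u := by
    intro u hu
    obtain ⟨η, hη⟩ := hc u hu
    have hsum : ∀ G : MvPolynomial (Fin 4) ℂ,
        ∑ m, eval (c u) (pderiv m G) * (Pi.single k 1 + Pi.single l η : Fin 4 → ℂ) m =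
          eval (c u) (pderiv k G) + eval (c u) (pderiv l G) * η := by
      intro G
      simp [mul_add, Finset.sum_add_distrib, Pi.single_apply]
    have d0 := hasDerivAt_eval_curve F hη
    have di := hasDerivAt_eval_curve (pderiv i F) hη
    have dj := hasDerivAt_eval_curve (pderiv j F) hη
    rw [hsum] at d0 di dj
    have e0 : eval (c u) (pderiv k F) + eval (c u) (pderiv l F) * η = 0 := by
      refine d0.unique ((hasDerivAt_const u (0 : ℂ)).congr_of_eventuallyEq ?_)
      filter_upwards [Metric.isOpen_ball.mem_nhds hu] with z hz
      exact hF0 z hz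
    refine (di.div dj (hFn u hu j)).congr_deriv ?_
    rw [div_eq_zero_iff]
    left
    refine (mul_eq_zero.1 ?_).resolve_left (hFn u hu l)
    obtain ⟨q, hq⟩ := hdvd
    have hs : eval (c u) (splitPoly i j k l F) = 0 := by rw [hq, map_mul, hF0 u hu, zero_mul]
    simp only [splitPoly, map_sub, map_mul] at hs
    linear_combination hs + (eval (c u) (pderiv j F) * eval (c u) (pderiv l (pderiv i F)) -
      eval (c u) (pderiv i F) * eval (c u) (pderiv l (pderiv j F))) * e0
  have hconst := Metric.isOpen_ball.is_const_of_deriv_eq_zero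
    (convex_ball (v k) ε).isPreconnected
    (fun u hu => (hder u hu).differentiableAt.differentiableWithinAt)
    (fun u hu => (hder u hu).deriv) (apply_mem_ball hw k) (apply_mem_ball hw' k)
  have hcw : c (w k) = w := by
    have : h w = w l := (hε' w hw).2.2.2 _ (apply_mem_ball hw l) (by simpa using hwF)
    simp [c, this]
  have hup : Function.update (Function.update w k (w' k)) l (w' l) = w' := by
    funext m
    by_cases hm : m = l
    · subst hm; simp
    · by_cases hmk : m = k
      · subst hmk; simp [hm]
      · rcases hijkl m with rfl | rfl | h | h
        · simp [hm, hmk, hi]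
        · simp [hm, hmk, hj]
        · exact absurd h hmk
        · exact absurd h hm
  have hcw' : c (w' k) = w' := by
    have : h (Function.update w k (w' k)) = w' l :=
      (hε' _ (hmem _ (apply_mem_ball hw' k))).2.2.2 _ (apply_mem_ball hw' l) (by rwa [hup])
    simp only [c, this, hup]
  simpa only [hcw, hcw'] using hconst

theorem differentiableAt_update_graph {h : (Fin 4 → ℂ) → ℂ} {c : ℂ → Fin 4 → ℂ} {l : Fin 4} {u : ℂ}
    (hc : DifferentiableAt ℂ c u) (hh : DifferentiableAt ℂ h (c u)) :
    DifferentiableAt ℂ (fun z => Function.update (c z) l (h (c z))) u := by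
  refine differentiableAt_pi.2 fun i => ?_
  by_cases hi : i = l
  · subst hi
    simp only [Function.update_self]
    exact hh.comp u hc
  · simpa only [Function.update_of_ne hi] using differentiableAt_pi.1 hc i

theorem differentiableAt_eval_graph (G : MvPolynomial (Fin 4) ℂ) {h : (Fin 4 → ℂ) → ℂ}
    {v : Fin 4 → ℂ} {m l : Fin 4} {u : ℂ} (hh : DifferentiableAt ℂ h (Function.update v m u)) :
    DifferentiableAt ℂ (fun z =>
      eval (Function.update (Function.update v m z) l (h (Function.update v m z))) G) u := by
  have h1 := differentiableAt_update_graph (l := l) (hasFDerivAt_update v u).differentiableAt hh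
  exact (hasDerivAt_eval_curve G (hasDerivAt_pi.1 h1.hasDerivAt)).differentiableAt

/-- If `F` divides the obstruction polynomials of all three splittings of the variables, then near
a zero `v` of `F` that is not critical, the gradient of `F` on `Z(F)` is proportional to a vector
whose `m`-th entry only depends on the `m`-th coordinate. -/
theorem exists_separated_gradient {F : MvPolynomial (Fin 4) ℂ} {v : Fin 4 → ℂ}
    (hv : eval v F = 0) (hd : ∀ i, eval v (pderiv i F) ≠ 0) (h₁ : F ∣ splitPoly 0 1 2 3 F)
    (h₂ : F ∣ splitPoly 2 1 0 3 F) (h₃ : F ∣ splitPoly 3 1 2 0 F) :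
    ∃ (α : Fin 4 → ℂ → ℂ), ∃ ρ > 0, (∀ m, DifferentiableOn ℂ (α m) (Metric.ball (v m) ρ)) ∧
      (∀ m, ∀ z ∈ Metric.ball (v m) ρ, α m z ≠ 0) ∧
      ∀ w ∈ Metric.ball v ρ, eval w F = 0 → ∀ m,
        eval w (pderiv m F) * α 1 (w 1) = eval w (pderiv 1 F) * α m (w m) := by
  obtain ⟨r, hr, hne⟩ := exists_ball_pderiv_ne_zero hd
  obtain ⟨r₁, hr₁, R01⟩ := exists_ball_ratio_eq hv hd (by decide) (by decide) h₁
  obtain ⟨r₂, hr₂, R21⟩ := exists_ball_ratio_eq hv hd (by decide) (by decide) h₂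
  obtain ⟨r₃, hr₃, R31⟩ := exists_ball_ratio_eq hv hd (by decide) (by decide) h₃
  obtain ⟨r₄, hr₄, R03⟩ := exists_ball_ratio_eq hv hd (by decide) (by decide)
    ((splitPoly_comm 2 1 0 3 F).symm ▸ h₂)
  obtain ⟨r₅, hr₅, R20⟩ := exists_ball_ratio_eq hv hd (by decide) (by decide)
    ((splitPoly_comm 3 1 2 0 F).symm ▸ h₃)
  obtain ⟨r₀, hr₀, hr₀r, hr₀₁, hr₀₂, hr₀₃, hr₀₄, hr₀₅⟩ : ∃ r₀ > 0, r₀ ≤ r ∧ r₀ ≤ r₁ ∧ r₀ ≤ r₂ ∧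
      r₀ ≤ r₃ ∧ r₀ ≤ r₄ ∧ r₀ ≤ r₅ :=
    ⟨min r (min r₁ (min r₂ (min r₃ (min r₄ r₅)))), by positivity, by simp⟩
  have hB : ∀ {a b : ℝ}, a ≤ b → ∀ {w}, w ∈ Metric.ball v a → w ∈ Metric.ball v b :=
    fun hab _ hw => Metric.ball_subset_ball hab hw
  obtain ⟨f, hfv, hf⟩ := exists_graph hv (hd 3)
  obtain ⟨g, hgv, hg⟩ := exists_graph hv (hd 2)
  obtain ⟨ε₃, hε₃, -, hf⟩ := hf r₀ hr₀
  obtain ⟨ε₂, hε₂, -, hg⟩ := hg r₀ hr₀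
  obtain ⟨ρ, hρ, hρ₃, hρ₂⟩ : ∃ ρ > 0, ρ ≤ ε₃ ∧ ρ ≤ ε₂ := ⟨min ε₃ ε₂, by positivity, by simp⟩
  let Q : (Fin 4 → ℂ) → Fin 4 → ℂ := fun w => Function.update w 3 (f w)
  let S : (Fin 4 → ℂ) → Fin 4 → ℂ := fun w => Function.update w 2 (g w)
  let rat : Fin 4 → Fin 4 → (Fin 4 → ℂ) → ℂ := fun i j w =>
    eval w (pderiv i F) / eval w (pderiv j F)
  have hQ : ∀ w ∈ Metric.ball v ρ, Q w ∈ Metric.ball v r₀ ∧ eval (Q w) F = 0 := fun w hw =>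
    ⟨(hf w (hB hρ₃ hw)).2.1, (hf w (hB hρ₃ hw)).2.2.1⟩
  have hS : ∀ w ∈ Metric.ball v ρ, S w ∈ Metric.ball v r₀ ∧ eval (S w) F = 0 := fun w hw =>
    ⟨(hg w (hB hρ₂ hw)).2.1, (hg w (hB hρ₂ hw)).2.2.1⟩
  have hQi : ∀ w, Q w 0 = w 0 ∧ Q w 1 = w 1 ∧ Q w 2 = w 2 := fun w => by simp [Q]
  have hSi : ∀ w, S w 0 = w 0 ∧ S w 1 = w 1 ∧ S w 3 = w 3 := fun w => by simp [S]
  have hrat0 : ∀ i j, ∀ w ∈ Metric.ball v r₀, rat i j w ≠ 0 := fun i j w hw =>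
    div_ne_zero (hne w (hB hr₀r hw) i) (hne w (hB hr₀r hw) j)
  have hrat : ∀ i j k, ∀ w ∈ Metric.ball v r₀, rat i j w = rat i k w / rat j k w := by
    intro i j k w hw
    have hi := hne w (hB hr₀r hw)
    simp only [rat]
    field_simp [hi i, hi j, hi k]
  have hvv : v ∈ Metric.ball v ρ := Metric.mem_ball_self hρ
  have hup : ∀ m, ∀ z ∈ Metric.ball (v m) ρ, Function.update v m z ∈ Metric.ball v ρ :=
    fun m z hz => update_mem_ball hvv hz
  have hQv : Q v = v := by simp [Q, hfv]
  let α : Fin 4 → ℂ → ℂ := ![fun x => rat 0 1 (Q (Function.update v 0 x)),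
    fun y => rat 2 1 v * rat 1 2 (Q (Function.update v 1 y)),
    fun s => rat 2 1 (Q (Function.update v 2 s)), fun t => rat 3 1 (S (Function.update v 3 t))]
  have hα0 : ∀ x, α 0 x = rat 0 1 (Q (Function.update v 0 x)) := fun _ => rfl
  have hα1 : ∀ x, α 1 x = rat 2 1 v * rat 1 2 (Q (Function.update v 1 x)) := fun _ => rfl
  have hα2 : ∀ x, α 2 x = rat 2 1 (Q (Function.update v 2 x)) := fun _ => rfl
  have hα3 : ∀ x, α 3 x = rat 3 1 (S (Function.update v 3 x)) := fun _ => rfl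
  have hvr : v ∈ Metric.ball v r₀ := Metric.mem_ball_self hr₀
  have hα : ∀ m, ∀ z ∈ Metric.ball (v m) ρ, α m z ≠ 0 := by
    intro m z hz
    have h := hup m z hz
    fin_cases m
    · exact hrat0 _ _ _ (hQ _ h).1
    · exact mul_ne_zero (hrat0 _ _ _ hvr) (hrat0 _ _ _ (hQ _ h).1)
    · exact hrat0 _ _ _ (hQ _ h).1
    · exact hrat0 _ _ _ (hS _ h).1
  have hdQ : ∀ i j m, ∀ z ∈ Metric.ball (v m) ρ,
      DifferentiableAt ℂ (fun z => rat i j (Q (Function.update v m z))) z := fun i j m z hz =>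
    have h := hup m z hz
    (differentiableAt_eval_graph _ (hf _ (hB hρ₃ h)).1).div
      (differentiableAt_eval_graph _ (hf _ (hB hρ₃ h)).1) (hne _ (hB hr₀r (hQ _ h).1) j)
  have hdS : ∀ i j m, ∀ z ∈ Metric.ball (v m) ρ,
      DifferentiableAt ℂ (fun z => rat i j (S (Function.update v m z))) z := fun i j m z hz =>
    have h := hup m z hz
    (differentiableAt_eval_graph _ (hg _ (hB hρ₂ h)).1).div
      (differentiableAt_eval_graph _ (hg _ (hB hρ₂ h)).1) (hne _ (hB hr₀r (hS _ h).1) j)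
  have e20 : ∀ w ∈ Metric.ball v ρ, ∀ p ∈ Metric.ball v r₀, eval p F = 0 → p 0 = w 0 →
      p 2 = w 2 → rat 2 0 p = α 2 (w 2) / α 0 (w 0) := by
    intro w hw p hp hpF h0 h2
    have hw' := update_mem_ball hw (apply_mem_ball hvv 1)
    obtain ⟨a, b⟩ := hQ _ hw'
    obtain ⟨a0, b0⟩ := hQ _ (hup 0 _ (apply_mem_ball hw 0))
    obtain ⟨a2, b2⟩ := hQ _ (hup 2 _ (apply_mem_ball hw 2))
    rw [show rat 2 0 p = rat 2 0 (Q (Function.update w 1 (v 1))) from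
      R20 _ (hB hr₀₅ hp) _ (hB hr₀₅ a) hpF b (by simp [hQi, h2]) (by simp [hQi, h0]),
      hrat 2 0 1 _ a, hα0, hα2]
    congr 1
    · exact R21 _ (hB hr₀₂ a) _ (hB hr₀₂ a2) b b2 (by simp [hQi]) (by simp [hQi])
    · exact R01 _ (hB hr₀₁ a) _ (hB hr₀₁ a0) b b0 (by simp [hQi]) (by simp [hQi])
  have e01 : ∀ w ∈ Metric.ball v ρ, ∀ p ∈ Metric.ball v r₀, eval p F = 0 → p 0 = w 0 →
      p 1 = w 1 → rat 0 1 p = α 0 (w 0) / α 1 (w 1) := by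
    intro w hw p hp hpF h0 h1
    have hw' := update_mem_ball hw (apply_mem_ball hvv 2)
    obtain ⟨a, b⟩ := hQ _ hw'
    obtain ⟨a1, b1⟩ := hQ _ (hup 1 _ (apply_mem_ball hw 1))
    have e := e20 _ hw' _ a b (hQi _).1 (hQi _).2.2
    have e' : rat 2 1 (Q (Function.update w 2 (v 2))) = rat 2 1 (Q (Function.update v 1 (w 1))) :=
      R21 _ (hB hr₀₂ a) _ (hB hr₀₂ a1) b b1 (by simp [hQi]) (by simp [hQi])
    have n1 := hrat0 2 1 _ a1
    have n2 := hrat0 2 1 _ hvr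
    have n3 := hα 0 _ (apply_mem_ball hw 0)
    have hα2v : α 2 (v 2) = rat 2 1 v := by rw [hα2, Function.update_eq_self, hQv]
    rw [show rat 0 1 p = rat 0 1 (Q (Function.update w 2 (v 2))) from
      R01 _ (hB hr₀₁ hp) _ (hB hr₀₁ a) hpF b (by simp [hQi, h0]) (by simp [hQi, h1]), hα1,
      hrat 1 2 1 _ a1, ← e']
    rw [hrat 2 0 1 _ a] at e
    simp only [Function.update_self, Function.update_of_ne (show (0 : Fin 4) ≠ 2 by decide),
      hα2v] at e
    have n4 := hrat0 0 1 _ a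
    rw [← e'] at n1
    have h11 : rat 1 1 (Q (Function.update v 1 (w 1))) = 1 := div_self (hne _ (hB hr₀r a1) 1)
    rw [h11]
    field_simp at e ⊢
    linear_combination -e
  have e03 : ∀ w ∈ Metric.ball v ρ, ∀ p ∈ Metric.ball v r₀, eval p F = 0 → p 0 = w 0 →
      p 3 = w 3 → rat 0 3 p = α 0 (w 0) / α 3 (w 3) := by
    intro w hw p hp hpF h0 h3
    have hw' := update_mem_ball hw (apply_mem_ball hvv 1)
    obtain ⟨a, b⟩ := hS _ hw'
    obtain ⟨a0, b0⟩ := hQ _ (hup 0 _ (apply_mem_ball hw 0))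
    obtain ⟨a3, b3⟩ := hS _ (hup 3 _ (apply_mem_ball hw 3))
    rw [show rat 0 3 p = rat 0 3 (S (Function.update w 1 (v 1))) from
      R03 _ (hB hr₀₄ hp) _ (hB hr₀₄ a) hpF b (by simp [hSi, h0]) (by simp [hSi, h3]),
      hrat 0 3 1 _ a, hα0, hα3]
    congr 1
    · exact R01 _ (hB hr₀₁ a) _ (hB hr₀₁ a0) b b0 (by simp [hSi, hQi]) (by simp [hSi, hQi])
    · exact R31 _ (hB hr₀₃ a) _ (hB hr₀₃ a3) b b3 (by simp [hSi]) (by simp [hSi])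
  refine ⟨α, min ρ r₀, by positivity, fun m z hz => ?_, fun m z hz => ?_, fun w hw hwF m => ?_⟩
  · have hz' : z ∈ Metric.ball (v m) ρ := Metric.ball_subset_ball (min_le_left _ _) hz
    refine DifferentiableAt.differentiableWithinAt ?_
    fin_cases m
    · exact hdQ _ _ _ _ hz'
    · exact (hdQ _ _ _ _ hz').const_mul _
    · exact hdQ _ _ _ _ hz'
    · exact hdS _ _ _ _ hz'
  · exact hα m z (Metric.ball_subset_ball (min_le_left _ _) hz)
  · have hwρ := hB (min_le_left _ _) hw
    have hwr := hB (min_le_right _ _) hw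
    have n := hne w (hB hr₀r hwr)
    have m0 := hα 0 _ (apply_mem_ball hwρ 0)
    have f20 := (div_eq_div_iff (n 0) m0).1 (e20 w hwρ w hwr hwF rfl rfl)
    have f01 := (div_eq_div_iff (n 1) (hα 1 _ (apply_mem_ball hwρ 1))).1
      (e01 w hwρ w hwr hwF rfl rfl)
    have f03 := (div_eq_div_iff (n 3) (hα 3 _ (apply_mem_ball hwρ 3))).1
      (e03 w hwρ w hwr hwF rfl rfl)
    have n0 := mul_ne_zero (n 0) m0
    clear_value α
    obtain rfl | rfl | rfl | rfl : m = 0 ∨ m = 1 ∨ m = 2 ∨ m = 3 := by revert m; decide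
    · simpa only [mul_comm] using f01
    · rfl
    · refine mul_right_cancel₀ n0 ?_
      linear_combination (α 1 (w 1) * eval w (pderiv 0 F)) * f20 +
        (α 2 (w 2) * eval w (pderiv 0 F)) * f01
    · refine mul_right_cancel₀ n0 ?_
      linear_combination (-α 1 (w 1) * eval w (pderiv 0 F)) * f03 +
        (α 3 (w 3) * eval w (pderiv 0 F)) * f01

/-- An analytic function with nonvanishing derivative has an analytic local inverse. -/
theorem exists_analytic_left_inverse {φ : ℂ → ℂ} {z₀ : ℂ} (hφ : AnalyticAt ℂ φ z₀)
    (hφ' : deriv φ z₀ ≠ 0) :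
    ∃ ψ : ℂ → ℂ, ∀ᶠ z in 𝓝 z₀, AnalyticAt ℂ φ z ∧ AnalyticAt ℂ ψ (φ z) ∧ ψ (φ z) = z :=
  ⟨hφ.hasStrictDerivAt.localInverse _ _ _ hφ', hφ.eventually_analyticAt.and
    ((hφ.continuousAt.eventually (hφ.analyticAt_localInverse hφ').eventually_analyticAt).and
      (HasStrictDerivAt.eventually_left_inverse ..))⟩

/-- If the gradient of `F` on `Z(F)` is proportional to `(α m (w m))ₘ` and `φ m` is a primitive of
`α m`, then `∑ m, φ m` is constant on every differentiable curve inside `Z(F)`. -/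
theorem sum_primitive_eq_of_curve {F : MvPolynomial (Fin 4) ℂ} {α φ : Fin 4 → ℂ → ℂ}
    {c : ℂ → Fin 4 → ℂ} {U : Set ℂ} (hU : IsOpen U) (hU' : IsPreconnected U)
    (hc : ∀ u ∈ U, DifferentiableAt ℂ c u) (hcF : ∀ u ∈ U, eval (c u) F = 0)
    (hφ : ∀ u ∈ U, ∀ m, HasDerivAt (φ m) (α m (c u m)) (c u m))
    (h1 : ∀ u ∈ U, eval (c u) (pderiv 1 F) ≠ 0)
    (hα : ∀ u ∈ U, ∀ m,
      eval (c u) (pderiv m F) * α 1 (c u 1) = eval (c u) (pderiv 1 F) * α m (c u m))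
    {a b : ℂ} (ha : a ∈ U) (hb : b ∈ U) : ∑ m, φ m (c a m) = ∑ m, φ m (c b m) := by
  have hder : ∀ u ∈ U, HasDerivAt (fun u => ∑ m, φ m (c u m)) 0 u := by
    intro u hu
    have hc' : ∀ m, HasDerivAt (fun z => c z m) (deriv c u m) u :=
      hasDerivAt_pi.1 (hc u hu).hasDerivAt
    have h0 : ∑ m, eval (c u) (pderiv m F) * deriv c u m = 0 :=
      (hasDerivAt_eval_curve F hc').unique ((hasDerivAt_const u (0 : ℂ)).congr_of_eventuallyEq
        ((hU.eventually_mem hu).mono hcF))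
    have hsum : ∑ m, α m (c u m) * deriv c u m = 0 := by
      refine (mul_eq_zero.1 ?_).resolve_left (h1 u hu)
      calc eval (c u) (pderiv 1 F) * ∑ m, α m (c u m) * deriv c u m
          = ∑ m, α 1 (c u 1) * (eval (c u) (pderiv m F) * deriv c u m) := by
            rw [Finset.mul_sum]
            exact Finset.sum_congr rfl fun m _ => by
              linear_combination -deriv c u m * hα u hu m
        _ = 0 := by rw [← Finset.mul_sum, h0, mul_zero]
    rw [← hsum]
    exact HasDerivAt.fun_sum fun m _ => (hφ u hu m).comp u (hc' m)
  exact hU.is_const_of_deriv_eq_zero hU'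
    (fun u hu => (hder u hu).differentiableAt.differentiableWithinAt) (fun u hu => (hder u hu).deriv) ha hb

/-- Near a zero of `F` with nonvanishing partial derivatives at which the gradient of `F` is
separated, `F = 0` is equivalent to an equation of the form `∑ m, φ m (w m) = 0`. -/
theorem exists_local_sum_form {F : MvPolynomial (Fin 4) ℂ} {v : Fin 4 → ℂ}
    (hv : eval v F = 0) (hd : ∀ i, eval v (pderiv i F) ≠ 0) (h₁ : F ∣ splitPoly 0 1 2 3 F)
    (h₂ : F ∣ splitPoly 2 1 0 3 F) (h₃ : F ∣ splitPoly 3 1 2 0 F) :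
    ∃ (φ ψ : Fin 4 → ℂ → ℂ), ∃ ε > 0, (∀ m, ∀ z ∈ Metric.ball (v m) ε,
        AnalyticAt ℂ (φ m) z ∧ AnalyticAt ℂ (ψ m) (φ m z) ∧ ψ m (φ m z) = z) ∧
      ∀ w ∈ Metric.ball v ε, eval w F = 0 ↔ ∑ m, φ m (w m) = 0 := by
  obtain ⟨α, ρ, hρ, hαd, hα0, hα⟩ := exists_separated_gradient hv hd h₁ h₂ h₃
  obtain ⟨r₁, hr₁, hne⟩ := exists_ball_pderiv_ne_zero hd
  choose φ hφ using fun m => (hαd m).isExactOn_ball.with_val_at (v m) 0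
  have hφv : ∀ m, φ m (v m) = 0 := fun m => (hφ m).1
  have hφ' : ∀ m, ∀ z ∈ Metric.ball (v m) ρ, HasDerivAt (φ m) (α m z) z := fun m => (hφ m).2
  have hvm : ∀ m, v m ∈ Metric.ball (v m) ρ := fun m => Metric.mem_ball_self hρ
  have han : ∀ m, AnalyticAt ℂ (φ m) (v m) := fun m =>
    DifferentiableOn.analyticAt (s := Metric.ball (v m) ρ)
      (fun z hz => (hφ' m z hz).differentiableAt.differentiableWithinAt)
      (Metric.ball_mem_nhds _ hρ)
  choose ψ hψ using fun m => exists_analytic_left_inverse (han m)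
    (by rw [(hφ' m _ (hvm m)).deriv]; exact hα0 m _ (hvm m))
  choose r₂ hr₂ hψ using fun m => Metric.eventually_nhds_iff_ball.1 (hψ m)
  obtain ⟨r, hr, hrρ, hr1, hr2⟩ : ∃ r > 0, r ≤ ρ ∧ r ≤ r₁ ∧ ∀ m, r ≤ r₂ m :=
    ⟨min ρ (min r₁ (Finset.univ.inf' Finset.univ_nonempty r₂)), by
      simp [hρ, hr₁, Finset.lt_inf'_iff, hr₂], min_le_left _ _,
      (min_le_right _ _).trans (min_le_left _ _), fun m => (min_le_right _ _).trans
        ((min_le_right _ _).trans (Finset.inf'_le _ (Finset.mem_univ m)))⟩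
  obtain ⟨h, hhv, hh⟩ := exists_graph hv (hd 3)
  obtain ⟨ε, hε, hεr, hh⟩ := hh r hr
  have hψr : ∀ m, ∀ z ∈ Metric.ball (v m) r, AnalyticAt ℂ (φ m) z ∧ AnalyticAt ℂ (ψ m) (φ m z) ∧
      ψ m (φ m z) = z := fun m z hz => hψ m z (Metric.ball_subset_ball (hr2 m) hz)
  refine ⟨φ, ψ, ε, hε, fun m z hz => hψr m z (Metric.ball_subset_ball hεr hz), fun w hw => ?_⟩
  have hsum : ∑ m, φ m (Function.update w 3 (h w) m) = 0 := by
    let l : ℂ → Fin 4 → ℂ := fun u => v + u • (w - v)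
    have hl : ∀ u, DifferentiableAt ℂ l u := fun u => by simp only [l]; fun_prop
    have hU : Convex ℝ (l ⁻¹' Metric.ball v ε) := by
      intro a ha b hb s t hs ht hst
      have := convex_ball v ε ha hb hs ht hst
      have e : l (s • a + t • b) = s • l a + t • l b := by
        ext i
        have hst' : (s : ℂ) + t = 1 := by exact_mod_cast hst
        simp [l]
        linear_combination (-v i) * hst'
      simpa only [Set.mem_preimage, e] using this
    have key := sum_primitive_eq_of_curve (α := α) (φ := φ) (F := F)
      (c := fun u => Function.update (l u) 3 (h (l u)))
      (Metric.isOpen_ball.preimage (continuous_iff_continuousAt.2 fun u => (hl u).continuousAt))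
      hU.isPreconnected
      (fun u hu => differentiableAt_update_graph (hl u) (hh _ hu).1)
      (fun u hu => (hh _ hu).2.2.1)
      (fun u hu m => hφ' m _ (apply_mem_ball (Metric.ball_subset_ball hrρ (hh _ hu).2.1) m))
      (fun u hu => hne _ (Metric.ball_subset_ball hr1 (hh _ hu).2.1) 1)
      (fun u hu => hα _ (Metric.ball_subset_ball hrρ (hh _ hu).2.1) (hh _ hu).2.2.1)
      (a := 1) (b := 0) (by simpa [l] using hw) (by simpa [l] using hε)
    simpa [l, hhv, hφv] using key
  have hw3 := apply_mem_ball hw 3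
  have hiff : eval w F = 0 ↔ h w = w 3 := by
    constructor
    · intro hF
      exact (hh w hw).2.2.2 _ hw3 (by simpa using hF)
    · intro e
      simpa [e] using (hh w hw).2.2.1
  have hsub : ∑ m, φ m (w m) = φ 3 (w 3) - φ 3 (h w) := by
    rw [← sub_zero (∑ m, φ m (w m)), ← hsum]
    simp [Fin.sum_univ_four]
  rw [hiff, hsub, sub_eq_zero]
  refine ⟨fun e => by rw [e], fun e => ?_⟩
  have hhw : h w ∈ Metric.ball (v 3) r := by simpa using apply_mem_ball (hh w hw).2.1 3
  rw [← (hψr 3 _ hhw).2.2, ← e, (hψr 3 _ (Metric.ball_subset_ball hεr hw3)).2.2]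

theorem specialSumForm_of_dvd_splitPoly {F : MvPolynomial (Fin 4) ℂ} (hF : Irreducible F)
    (hd : ∀ i, pderiv i F ≠ 0) (h₁ : F ∣ splitPoly 0 1 2 3 F) (h₂ : F ∣ splitPoly 2 1 0 3 F)
    (h₃ : F ∣ splitPoly 3 1 2 0 F) : SpecialSumForm F := by
  refine ⟨criticalZeros F, ⟨_, rfl⟩, fun v hv => hv F (by simp), algDimLE_criticalZeros hF hd,
    fun v hv hvc => ?_⟩
  have hdv : ∀ i, eval v (pderiv i F) ≠ 0 := by
    intro i hi
    refine hvc fun f hf => ?_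
    obtain rfl | rfl := hf
    · exact hv
    · rw [map_prod]
      exact Finset.prod_eq_zero (Finset.mem_univ i) hi
  obtain ⟨φ, ψ, ε, hε, hφ, hsum⟩ := exists_local_sum_form hv hdv h₁ h₂ h₃
  refine ⟨fun i => Metric.ball (v i) ε, φ, ψ, fun i => ⟨Metric.isOpen_ball,
    Metric.mem_ball_self hε, fun a ha b hb e => ?_, hφ i⟩, fun x y s t hx hy hs ht => ?_⟩
  · rw [← (hφ i a ha).2.2, e, (hφ i b hb).2.2]
  · rw [hsum ![x, y, s, t] ((dist_pi_lt_iff hε).2 fun i => by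
      fin_cases i <;> [exact hx; exact hy; exact hs; exact ht]), Fin.sum_univ_four]
    rfl

/-- **Proposition 2.7 (key proposition).** Either `F` has the special sum form, or for one of
the three coordinate splits, represented by the permutations `id`, `swap x s`, `swap x t`
of the variables, both properties (a) and (b) hold, with an absolute constant in the
`O(δ⁴)` bounds. -/
theorem key_proposition :
    ∃ c : ℝ, 0 < c ∧ ∀ (δ : ℕ) (F : MvPolynomial (Fin 4) ℂ),
      Irreducible F → F.totalDegree = δ → (∀ i : Fin 4, pderiv i F ≠ 0) →
      SpecialSumForm F ∨
      ∃ σ : Equiv.Perm (Fin 4),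
        σ ∈ ({Equiv.refl (Fin 4), Equiv.swap 0 2, Equiv.swap 0 3} : Set (Equiv.Perm (Fin 4))) ∧
        GoodSplit c δ (rename σ F) := by
  refine ⟨37, by norm_num, ?_⟩
  rintro _ F hF rfl hd
  obtain h | ⟨h₁, h₂, h₃⟩ := goodSplit_or_dvd_splitPoly hF hd
  · exact .inr h
  · exact .inl (specialSumForm_of_dvd_splitPoly hF hd h₁ h₂ h₃)
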